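/- Let s be an integer with 2 < s < n. There is a constant q₀ depending only on n such that whenever q ≥ q₀, every EKR-set of totally isotropic s-spaces has cardinality strictly less than h_{n,s} = [n choose s]_q · ∏_{i=1}^{s−1} (q^{n−i} + 1); in particular no EKR-set of s-spaces is ratio-sharp. -/

import Mathlib

open scoped Classical

open Module

section Defs

variable {F V : Type} [Field F] [AddCommGroup V] [Module F V]

/-- The orthogonal complement of a subspace with respect to a bilinear form. -/
def bperp (B : V →ₗ[F] V →ₗ[F] F) (W : Submodule F V) : Submodule F V :=
  ⨅ w ∈ W, LinearMap.ker (B w)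

/-- A subspace is totally isotropic for `B`. -/
def IsTotIso (B : V →ₗ[F] V →ₗ[F] F) (W : Submodule F V) : Prop :=
  ∀ u ∈ W, ∀ w ∈ W, B u w = 0

/-- `B` is an alternating form. -/
def IsAltForm (B : V →ₗ[F] V →ₗ[F] F) : Prop := ∀ v, B v v = 0

/-- `B` is nondegenerate. -/
def NondegForm (B : V →ₗ[F] V →ₗ[F] F) : Prop := ∀ v, (∀ w, B v w = 0) → v = 0

/-- A flag of type `J` of totally isotropic subspaces: entries outside `J` are `⊥`. -/
structure SFlag (B : V →ₗ[F] V →ₗ[F] F) (J : Finset ℕ) where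
  space : ℕ → Submodule F V
  isotropic : ∀ i ∈ J, IsTotIso B (space i)
  finrank_eq : ∀ i ∈ J, Module.finrank F (space i) = i
  mono : ∀ i ∈ J, ∀ j ∈ J, i ≤ j → space i ≤ space j
  eq_bot : ∀ i, i ∉ J → space i = ⊥

/-- Two flags of type `J` are opposite. -/
def FlagOpp {B : V →ₗ[F] V →ₗ[F] F} {J : Finset ℕ} (C C' : SFlag B J) : Prop :=
  ∀ i ∈ J, bperp B (C.space i) ⊓ C'.space i = ⊥

/-- An EKR-set of flags of type `J`: no two members are opposite. -/
def IsEKRFlags {B : V →ₗ[F] V →ₗ[F] F} {J : Finset ℕ} (𝓕 : Set (SFlag B J)) : Prop :=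
  ∀ C ∈ 𝓕, ∀ C' ∈ 𝓕, ¬ FlagOpp C C'

/-- Two subspaces are opposite. -/
def SpaceOpp (B : V →ₗ[F] V →ₗ[F] F) (S T : Submodule F V) : Prop :=
  bperp B S ⊓ T = ⊥

/-- An EKR-set of totally isotropic `s`-spaces: no two members are opposite. -/
def IsEKRSpaces (B : V →ₗ[F] V →ₗ[F] F) (s : ℕ) (𝓕 : Set (Submodule F V)) : Prop :=
  (∀ S ∈ 𝓕, IsTotIso B S ∧ Module.finrank F S = s) ∧
    ∀ S ∈ 𝓕, ∀ T ∈ 𝓕, ¬ SpaceOpp B S T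

/-- An `s`-space `S` is heavy with respect to a set `𝓕` of flags: every flag whose
`s`-th entry equals `S` belongs to `𝓕`. -/
def Heavy {B : V →ₗ[F] V →ₗ[F] F} {J : Finset ℕ} (𝓕 : Set (SFlag B J)) (s : ℕ)
    (S : Submodule F V) : Prop :=
  ∀ C : SFlag B J, C.space s = S → C ∈ 𝓕

end Defs

/-- `z_k = ∏_{i=1}^k (q^i-1)/(q-1)`. -/
noncomputable def zpol (q k : ℕ) : ℝ :=
  ∏ i ∈ Finset.Icc 1 k, ((q : ℝ) ^ i - 1) / ((q : ℝ) - 1)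

/-- The Gaussian binomial coefficient `[m choose k]_q` as a real number. -/
noncomputable def gaussq (q m k : ℕ) : ℝ :=
  ∏ i ∈ Finset.Icc 1 k, ((q : ℝ) ^ (m - k + i) - 1) / ((q : ℝ) ^ i - 1)

/-- `Φ_m^s` in `PS(n,1,q)`: the number of totally isotropic `s`-spaces containing a
fixed totally isotropic `m`-space. -/
noncomputable def PhiP (q n m s : ℕ) : ℝ :=
  gaussq q (n - m) (s - m) * ∏ i ∈ Finset.Icc 1 (s - m), ((q : ℝ) ^ (n - m + 1 - i) + 1)

set_option linter.unusedSectionVars false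

section Basics

variable {F V : Type} [Field F] [Fintype F] [AddCommGroup V] [Module F V] [Fintype V]

/-- symplectic data -/
structure Symp (B : V →ₗ[F] V →ₗ[F] F) (n : ℕ) : Prop where
  alt : IsAltForm B
  nondeg : NondegForm B
  dim : Module.finrank F V = 2 * n

theorem mem_bperp {B : V →ₗ[F] V →ₗ[F] F} {W : Submodule F V} {v : V} :
    v ∈ bperp B W ↔ ∀ w ∈ W, B w v = 0 := by
  simp [bperp, Submodule.mem_iInf]

theorem Symp.swap {B : V →ₗ[F] V →ₗ[F] F} {n : ℕ} (h : Symp B n) (u v : V) :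
    B u v = - B v u := by
  have := h.alt (u + v)
  simp only [map_add, LinearMap.add_apply, h.alt u, h.alt v] at this
  rw [zero_add, add_zero] at this
  exact eq_neg_of_add_eq_zero_right this

theorem Symp.symm0 {B : V →ₗ[F] V →ₗ[F] F} {n : ℕ} (h : Symp B n) {u v : V}
    (huv : B u v = 0) : B v u = 0 := by
  rw [h.swap, huv, neg_zero]

theorem Symp.nd {B : V →ₗ[F] V →ₗ[F] F} {n : ℕ} (h : Symp B n) :
    LinearMap.BilinForm.Nondegenerate B := by
  refine ⟨h.nondeg, fun v hv => h.nondeg v fun w => h.symm0 (hv w)⟩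

theorem bperp_eq {B : V →ₗ[F] V →ₗ[F] F} (W : Submodule F V) :
    bperp B W = LinearMap.BilinForm.orthogonal B W := by
  ext v
  rw [mem_bperp, LinearMap.BilinForm.mem_orthogonal_iff]

theorem Symp.finrank_bperp {B : V →ₗ[F] V →ₗ[F] F} {n : ℕ} (h : Symp B n) (W : Submodule F V) :
    finrank F (bperp B W) = 2 * n - finrank F W := by
  rw [bperp_eq, LinearMap.BilinForm.finrank_orthogonal h.nd, h.dim]

theorem Symp.finrank_le {B : V →ₗ[F] V →ₗ[F] F} {n : ℕ} (h : Symp B n) (W : Submodule F V) :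
    finrank F W ≤ 2 * n := by
  rw [← h.dim]; exact Submodule.finrank_le W

theorem bperp_sup {B : V →ₗ[F] V →ₗ[F] F} (S T : Submodule F V) :
    bperp B (S ⊔ T) = bperp B S ⊓ bperp B T := by
  ext v
  simp only [Submodule.mem_inf, mem_bperp]
  constructor
  · intro h
    exact ⟨fun w hw => h w (Submodule.mem_sup_left hw), fun w hw => h w (Submodule.mem_sup_right hw)⟩
  · rintro ⟨h1, h2⟩ w hw
    obtain ⟨a, ha, b, hb, rfl⟩ := Submodule.mem_sup.1 hw
    simp [h1 a ha, h2 b hb]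

theorem Symp.bperp_bperp {B : V →ₗ[F] V →ₗ[F] F} {n : ℕ} (h : Symp B n) (W : Submodule F V) :
    bperp B (bperp B W) = W := by
  rw [bperp_eq, bperp_eq]
  exact LinearMap.BilinForm.orthogonal_orthogonal h.nd (fun u v huv => h.symm0 huv) W

theorem isTotIso_iff {B : V →ₗ[F] V →ₗ[F] F} (W : Submodule F V) :
    IsTotIso B W ↔ W ≤ bperp B W := by
  constructor
  · intro h v hv
    exact mem_bperp.2 fun w hw => h w hw v hv
  · intro h u hu w hw
    exact mem_bperp.1 (h hw) u hu

theorem Symp.iso_le {B : V →ₗ[F] V →ₗ[F] F} {n : ℕ} (h : Symp B n) {W : Submodule F V}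
    (hW : IsTotIso B W) : finrank F W ≤ n := by
  have h1 := Submodule.finrank_mono ((isTotIso_iff W).1 hW)
  rw [h.finrank_bperp] at h1
  omega

theorem mem_bperp_span {B : V →ₗ[F] V →ₗ[F] F} {u v : V} :
    v ∈ bperp B (F ∙ u) ↔ B u v = 0 := by
  rw [mem_bperp]
  constructor
  · intro h; exact h u (Submodule.mem_span_singleton_self u)
  · intro h w hw
    obtain ⟨c, rfl⟩ := Submodule.mem_span_singleton.1 hw
    simp [h]

theorem le_bperp_span {B : V →ₗ[F] V →ₗ[F] F} {n : ℕ} (hB : Symp B n) {u : V} {S : Submodule F V} :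
    S ≤ bperp B (F ∙ u) ↔ u ∈ bperp B S := by
  rw [mem_bperp]
  constructor
  · intro h w hw; exact hB.symm0 (mem_bperp_span.1 (h hw))
  · intro h w hw; exact mem_bperp_span.2 (hB.symm0 (h w hw))

/-- indicator -/
noncomputable def ind (S : Submodule F V) (v : V) : ℝ := if v ∈ S then 1 else 0

theorem ind_nonneg (S : Submodule F V) (v : V) : 0 ≤ ind S v := by
  unfold ind; split_ifs <;> norm_num

theorem ind_zero (S : Submodule F V) : ind S 0 = 1 := by
  simp [ind]

theorem ind_mul (S T : Submodule F V) (v : V) : ind S v * ind T v = ind (S ⊓ T) v := by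
  unfold ind
  by_cases h1 : v ∈ S <;> by_cases h2 : v ∈ T <;> simp [h1, h2]

theorem ind_self (S : Submodule F V) (v : V) : ind S v * ind S v = ind S v := by
  rw [ind_mul, inf_idem]

theorem ind_smul (S : Submodule F V) {c : F} (hc : c ≠ 0) (v : V) : ind S (c • v) = ind S v := by
  unfold ind
  rw [Submodule.smul_mem_iff _ hc]

theorem sum_ind (S : Submodule F V) : ∑ v, ind S v = (Fintype.card F : ℝ) ^ finrank F S := by
  have h := Module.card_eq_pow_finrank (K := F) (V := S)
  unfold ind
  rw [Finset.sum_boole]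
  rw [← Nat.cast_pow, ← h]
  congr 1
  rw [Fintype.card_subtype]

theorem sum_mem_eq (S : Submodule F V) (f : V → ℝ) :
    ∑ v ∈ Finset.univ.filter (fun v => v ∈ S), f v = ∑ v, ind S v * f v := by
  rw [Finset.sum_filter]
  refine Finset.sum_congr rfl fun v _ => ?_
  unfold ind; split_ifs <;> simp

/-- The totally isotropic `s`-spaces. -/
noncomputable def Om (B : V →ₗ[F] V →ₗ[F] F) (s : ℕ) : Finset (Submodule F V) :=
  (Set.toFinite {S : Submodule F V | IsTotIso B S ∧ finrank F S = s}).toFinset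

theorem mem_Om {B : V →ₗ[F] V →ₗ[F] F} {s : ℕ} {S : Submodule F V} :
    S ∈ Om B s ↔ IsTotIso B S ∧ finrank F S = s := by
  simp [Om]

end Basics

section Counts

variable {F V : Type} [Field F] [Fintype F] [AddCommGroup V] [Module F V] [Fintype V]

theorem finrank_sup_span {R : Submodule F V} {v : V} (hv : v ∉ R) :
    finrank F (R ⊔ (F ∙ v) : Submodule F V) = finrank F R + 1 := by
  have hv0 : v ≠ 0 := fun h => hv (h ▸ R.zero_mem)
  have h1 := Submodule.finrank_sup_add_finrank_inf_eq R (F ∙ v)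
  have h2 : R ⊓ (F ∙ v) = ⊥ := by
    rw [Submodule.eq_bot_iff]
    rintro x ⟨hx1, hx2⟩
    obtain ⟨c, rfl⟩ := Submodule.mem_span_singleton.1 hx2
    by_contra hne
    have hc : c ≠ 0 := by rintro rfl; simp at hne
    exact hv ((Submodule.smul_mem_iff _ hc).1 hx1)
  rw [h2, finrank_bot, finrank_span_singleton hv0] at h1
  omega

theorem iso_sup_span {B : V →ₗ[F] V →ₗ[F] F} {n : ℕ} (h : Symp B n) {R : Submodule F V} {v : V}
    (hR : IsTotIso B R) (hv : v ∈ bperp B R) : IsTotIso B (R ⊔ (F ∙ v)) := by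
  intro u hu w hw
  obtain ⟨a, ha, b, hb, rfl⟩ := Submodule.mem_sup.1 hu
  obtain ⟨c, hc, d, hd, rfl⟩ := Submodule.mem_sup.1 hw
  obtain ⟨x, rfl⟩ := Submodule.mem_span_singleton.1 hb
  obtain ⟨y, rfl⟩ := Submodule.mem_span_singleton.1 hd
  have h1 := mem_bperp.1 hv
  simp [hR a ha c hc, h1 a ha, h.symm0 (h1 c hc), h.alt v]

theorem iso_span {B : V →ₗ[F] V →ₗ[F] F} {n : ℕ} (h : Symp B n) (v : V) :
    IsTotIso B (F ∙ v) := by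
  intro u hu w hw
  obtain ⟨x, rfl⟩ := Submodule.mem_span_singleton.1 hu
  obtain ⟨y, rfl⟩ := Submodule.mem_span_singleton.1 hw
  simp [h.alt v]

/-- number of isotropic `s`-spaces containing `R` -/
noncomputable def cnt (B : V →ₗ[F] V →ₗ[F] F) (s : ℕ) (R : Submodule F V) : ℝ :=
  ∑ S ∈ Om B s, if R ≤ S then 1 else 0

/-- closed formula for the number -/
noncomputable def phi (q : ℝ) (n s j : ℕ) : ℝ :=
  ∏ i ∈ Finset.Ico j s, (q ^ (2 * n - i) - q ^ i) / (q ^ s - q ^ i)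

theorem one_lt_q (F : Type) [Field F] [Fintype F] : (1 : ℝ) < (Fintype.card F : ℝ) := by
  exact_mod_cast Fintype.one_lt_card

theorem cnt_eq {B : V →ₗ[F] V →ₗ[F] F} {n s : ℕ} (h : Symp B n) (k : ℕ) :
    ∀ {j : ℕ} {R : Submodule F V}, IsTotIso B R → finrank F R = j → j + k = s →
    cnt B s R = phi (Fintype.card F) n s j := by
  have hq := one_lt_q F
  set q : ℝ := (Fintype.card F : ℝ) with hqdef
  induction k with
  | zero =>
    intro j R hR hj hk
    have hjs : j = s := by omega
    subst hjs
    have : phi q n j j = 1 := by simp [phi]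
    rw [this, cnt, Finset.sum_eq_single_of_mem R (mem_Om.2 ⟨hR, hj⟩)]
    · simp
    · intro S hS hne
      rw [if_neg]
      intro hle
      apply hne
      exact (Submodule.eq_of_le_of_finrank_eq hle (by rw [hj, (mem_Om.1 hS).2])).symm
  | succ k ih =>
    intro j R hR hj hk
    have hA : ∑ v, (ind (bperp B R) v - ind R v) * cnt B s (R ⊔ (F ∙ v))
        = (q ^ (2 * n - j) - q ^ j) * phi q n s (j + 1) := by
      have : ∀ v : V, (ind (bperp B R) v - ind R v) * cnt B s (R ⊔ (F ∙ v))
        = (ind (bperp B R) v - ind R v) * phi q n s (j + 1) := by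
        intro v
        by_cases h2 : v ∈ R
        · have h3 := (isTotIso_iff R).1 hR h2
          simp [ind, h2, h3]
        · by_cases h3 : v ∈ bperp B R
          · rw [ih (iso_sup_span h hR h3) (j := j + 1) (by rw [finrank_sup_span h2, hj]) (by omega)]
          · simp [ind, h2, h3]
      rw [Finset.sum_congr rfl fun v _ => this v, ← Finset.sum_mul, Finset.sum_sub_distrib,
        sum_ind, sum_ind, h.finrank_bperp, hj]
    have hC : ∑ v, (ind (bperp B R) v - ind R v) * cnt B s (R ⊔ (F ∙ v))
        = cnt B s R * (q ^ s - q ^ j) := by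
      unfold cnt
      simp_rw [Finset.mul_sum]
      rw [Finset.sum_comm, Finset.sum_mul]
      refine Finset.sum_congr rfl fun S hS => ?_
      obtain ⟨hS1, hS2⟩ := mem_Om.1 hS
      by_cases hRS : R ≤ S
      · have hSR : S ≤ bperp B R := by
          intro x hx
          exact mem_bperp.2 fun w hw => hS1 w (hRS hw) x hx
        have : ∀ v : V, ((ind (bperp B R) v - ind R v) * if R ⊔ (F ∙ v) ≤ S then 1 else 0)
          = ind S v - ind R v := by
          intro v
          by_cases h2 : v ∈ S
          · simp [ind, h2, hSR h2, hRS]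
          · have h3 : v ∉ R := fun h => h2 (hRS h)
            simp [ind, h2, h3]
        rw [Finset.sum_congr rfl fun v _ => this v, Finset.sum_sub_distrib, sum_ind, sum_ind,
          if_pos hRS, hS2, hj, one_mul]
      · simp [hRS]
    have hpos : q ^ s - q ^ j ≠ 0 := by
      have : q ^ j < q ^ s := pow_lt_pow_right₀ hq (by omega)
      linarith
    have : phi q n s j = (q ^ (2 * n - j) - q ^ j) / (q ^ s - q ^ j) * phi q n s (j + 1) := by
      unfold phi
      rw [Finset.prod_eq_prod_Ico_succ_bot (by omega)]
    rw [this]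
    rw [hA] at hC
    field_simp
    linarith

theorem phi_nonneg {q : ℝ} (hq : 1 < q) {n s j : ℕ} (hs : s ≤ n) : 0 ≤ phi q n s j := by
  apply Finset.prod_nonneg
  intro i hi
  rw [Finset.mem_Ico] at hi
  apply div_nonneg
  · have : q ^ i ≤ q ^ (2 * n - i) := pow_le_pow_right₀ hq.le (by omega)
    linarith
  · have : q ^ i ≤ q ^ s := pow_le_pow_right₀ hq.le (by omega)
    linarith

theorem phi_pos {q : ℝ} (hq : 1 < q) {n s j : ℕ} (hs : s ≤ n) : 0 < phi q n s j := by
  apply Finset.prod_pos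
  intro i hi
  rw [Finset.mem_Ico] at hi
  apply div_pos
  · have : q ^ i < q ^ (2 * n - i) := pow_lt_pow_right₀ hq (by omega)
    linarith
  · have : q ^ i < q ^ s := pow_lt_pow_right₀ hq (by omega)
    linarith

theorem phi_succ {q : ℝ} (hq : 1 < q) {n s j : ℕ} (hj : j < s) :
    phi q n s j * (q ^ s - q ^ j) = (q ^ (2 * n - j) - q ^ j) * phi q n s (j + 1) := by
  have hpos : q ^ s - q ^ j ≠ 0 := by
    have : q ^ j < q ^ s := pow_lt_pow_right₀ hq (by omega)
    linarith
  have : phi q n s j = (q ^ (2 * n - j) - q ^ j) / (q ^ s - q ^ j) * phi q n s (j + 1) := by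
    unfold phi
    rw [Finset.prod_eq_prod_Ico_succ_bot (by omega)]
  rw [this]
  field_simp

/-- comparison of consecutive values -/
theorem phi_step {q : ℝ} (hq : 1 < q) {n s j : ℕ} (hj : j < s) (hs : s ≤ n) :
    phi q n s (j + 1) * q ^ (2 * n - j) ≤ q ^ s * phi q n s j := by
  have h1 := phi_succ hq (n := n) hj
  have h2 : 0 ≤ phi q n s (j + 1) := phi_nonneg hq hs
  have h0 : 0 ≤ phi q n s j := phi_nonneg hq hs
  have hle : phi q n s (j + 1) ≤ phi q n s j := by
    have h3 : q ^ j < q ^ s := pow_lt_pow_right₀ hq (by omega)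
    have h4 : q ^ s ≤ q ^ (2 * n - j) := pow_le_pow_right₀ hq.le (by omega)
    by_contra hcon
    push Not at hcon
    nlinarith [mul_le_mul_of_nonneg_right h4 h2]
  have h5 : 0 < q ^ j := by positivity
  nlinarith [mul_le_mul_of_nonneg_right hle h5.le]

theorem phi_shift {q : ℝ} (hq : 1 < q) {n s ρ j : ℕ} (hs : ρ ≤ s) (hn : s ≤ n) :
    phi q (n - ρ) (s - ρ) j = phi q n s (ρ + j) := by
  unfold phi
  have : Finset.Ico (ρ + j) s = (Finset.Ico j (s - ρ)).map (addRightEmbedding ρ) := by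
    rw [Finset.map_add_right_Ico]; congr 1 <;> omega
  rw [this, Finset.prod_map]
  refine Finset.prod_congr rfl fun i hi => ?_
  rw [Finset.mem_Ico] at hi
  simp only [addRightEmbedding_apply]
  have e1 : q ^ (2 * n - (i + ρ)) = q ^ (2 * (n - ρ) - i) * q ^ ρ := by
    rw [← pow_add]; congr 1; omega
  have e2 : q ^ s = q ^ (s - ρ) * q ^ ρ := by
    rw [← pow_add]; congr 1; omega
  rw [e1, e2, pow_add, ← sub_mul, ← sub_mul, mul_div_mul_right]
  positivity

end Counts

section Spectral

variable {F V : Type} [Field F] [Fintype F] [AddCommGroup V] [Module F V] [Fintype V]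

/-- number of members through `v` -/
noncomputable def deg (A : Finset (Submodule F V)) (v : V) : ℝ := ∑ S ∈ A, ind S v

/-- number of members in the perp of `v` -/
noncomputable def codeg (B : V →ₗ[F] V →ₗ[F] F) (A : Finset (Submodule F V)) (v : V) : ℝ :=
  ∑ S ∈ A, ind (bperp B S) v

theorem deg_nonneg (A : Finset (Submodule F V)) (v : V) : 0 ≤ deg A v :=
  Finset.sum_nonneg fun S _ => ind_nonneg S v

theorem deg_zero (A : Finset (Submodule F V)) : deg A 0 = A.card := by
  simp [deg, ind_zero]

theorem codeg_zero (B : V →ₗ[F] V →ₗ[F] F) (A : Finset (Submodule F V)) :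
    codeg B A 0 = A.card := by
  simp [codeg, ind_zero]

theorem deg_smul (A : Finset (Submodule F V)) {c : F} (hc : c ≠ 0) (v : V) :
    deg A (c • v) = deg A v := by
  unfold deg
  exact Finset.sum_congr rfl fun S _ => ind_smul S hc v

theorem sum_deg {B : V →ₗ[F] V →ₗ[F] F} {s : ℕ} {A : Finset (Submodule F V)}
    (hA : A ⊆ Om B s) : ∑ v, deg A v = A.card * (Fintype.card F : ℝ) ^ s := by
  unfold deg
  rw [Finset.sum_comm, Finset.sum_congr rfl (g := fun _ => (Fintype.card F : ℝ) ^ s)]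
  · simp
  · intro S hS
    rw [sum_ind, (mem_Om.1 (hA hS)).2]

theorem sum_codeg {B : V →ₗ[F] V →ₗ[F] F} {n s : ℕ} (h : Symp B n) {A : Finset (Submodule F V)}
    (hA : A ⊆ Om B s) : ∑ v, codeg B A v = A.card * (Fintype.card F : ℝ) ^ (2 * n - s) := by
  unfold codeg
  rw [Finset.sum_comm, Finset.sum_congr rfl (g := fun _ => (Fintype.card F : ℝ) ^ (2 * n - s))]
  · simp
  · intro S hS
    rw [sum_ind, h.finrank_bperp, (mem_Om.1 (hA hS)).2]

theorem sum_mul_family (f g : Submodule F V → Submodule F V) (A A' : Finset (Submodule F V)) :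
    ∑ v, (∑ S ∈ A, ind (f S) v) * (∑ T ∈ A', ind (g T) v)
      = ∑ S ∈ A, ∑ T ∈ A', (Fintype.card F : ℝ) ^ finrank F (f S ⊓ g T : Submodule F V) := by
  simp_rw [Finset.sum_mul_sum]
  rw [Finset.sum_comm]
  refine Finset.sum_congr rfl fun S _ => ?_
  rw [Finset.sum_comm]
  refine Finset.sum_congr rfl fun T _ => ?_
  simp_rw [ind_mul]
  rw [sum_ind]

theorem cross_lower {B : V →ₗ[F] V →ₗ[F] F} {A A' : Finset (Submodule F V)}
    (hX : ∀ S ∈ A, ∀ T ∈ A', ¬ SpaceOpp B S T) :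
    (Fintype.card F : ℝ) * A.card * A'.card ≤ ∑ v, codeg B A v * deg A' v := by
  unfold codeg deg
  rw [sum_mul_family (fun S => bperp B S) (fun T => T)]
  have : ∀ S ∈ A, ∀ T ∈ A', (Fintype.card F : ℝ) ≤
      (Fintype.card F : ℝ) ^ finrank F (bperp B S ⊓ T : Submodule F V) := by
    intro S hS T hT
    have h1 := hX S hS T hT
    unfold SpaceOpp at h1
    have h2 : finrank F (bperp B S ⊓ T : Submodule F V) ≠ 0 := by
      intro h3
      exact h1 (Submodule.finrank_eq_zero.1 h3)
    exact le_self_pow₀ (one_lt_q F).le h2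
  calc (Fintype.card F : ℝ) * A.card * A'.card
      = ∑ S ∈ A, ∑ T ∈ A', (Fintype.card F : ℝ) := by simp; ring
    _ ≤ _ := Finset.sum_le_sum fun S hS => Finset.sum_le_sum fun T hT => this S hS T hT

theorem codeg_sq {B : V →ₗ[F] V →ₗ[F] F} {n s : ℕ} (h : Symp B n) {A : Finset (Submodule F V)}
    (hA : A ⊆ Om B s) :
    (∑ v, codeg B A v * codeg B A v) * (Fintype.card F : ℝ) ^ (2 * s)
      = (Fintype.card F : ℝ) ^ (2 * n) * ∑ v, deg A v * deg A v := by
  unfold codeg deg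
  rw [sum_mul_family (fun S => bperp B S) (fun S => bperp B S),
    sum_mul_family (fun S => S) (fun T => T), Finset.sum_mul, Finset.mul_sum]
  refine Finset.sum_congr rfl fun S hS => ?_
  rw [Finset.sum_mul, Finset.mul_sum]
  refine Finset.sum_congr rfl fun T hT => ?_
  rw [← pow_add, ← pow_add]
  congr 1
  have h1 := Submodule.finrank_sup_add_finrank_inf_eq S T
  rw [(mem_Om.1 (hA hS)).2, (mem_Om.1 (hA hT)).2] at h1
  have h2 : finrank F (bperp B S ⊓ bperp B T : Submodule F V)
      = 2 * n - finrank F (S ⊔ T : Submodule F V) := by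
    rw [← bperp_sup, h.finrank_bperp]
  have h3 := h.finrank_le (S ⊔ T)
  omega

theorem sum_ne_zero_eq (f : V → ℝ) : ∑ v, (if v = 0 then 0 else f v) = ∑ v, f v - f 0 := by
  have : ∀ v, (if v = 0 then 0 else f v) = f v - if v = 0 then f 0 else 0 := by
    intro v; split_ifs with hv
    · simp [hv]
    · simp
  rw [Finset.sum_congr rfl fun v _ => this v, Finset.sum_sub_distrib]
  simp

theorem card_V {B : V →ₗ[F] V →ₗ[F] F} {n : ℕ} (h : Symp B n) :
    (Fintype.card V : ℝ) = (Fintype.card F : ℝ) ^ (2 * n) := by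
  rw [Module.card_eq_pow_finrank (K := F) (V := V), h.dim]; simp

theorem sum_centered (f h : V → ℝ) (a b X Y m : ℝ) (hf0 : f 0 = a) (hh0 : h 0 = b)
    (hf : ∑ v, f v = a * X) (hh : ∑ v, h v = b * Y) (hm : (Fintype.card V : ℝ) = m + 1)
    (hm0 : 0 < m) :
    ∑ v, (if v = 0 then 0 else f v - a * ((X - 1) / m)) * (if v = 0 then 0 else h v - b * ((Y - 1) / m))
      = ∑ v, f v * h v - a * b - a * b * ((X - 1) * (Y - 1) / m) := by
  have : ∀ v : V, (if v = 0 then 0 else f v - a * ((X - 1) / m)) *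
      (if v = 0 then 0 else h v - b * ((Y - 1) / m)) =
      (if v = 0 then 0 else (f v * h v - b * ((Y - 1) / m) * f v - a * ((X - 1) / m) * h v
        + a * ((X - 1) / m) * (b * ((Y - 1) / m)))) := by
    intro v; split_ifs <;> ring
  rw [Finset.sum_congr rfl fun v _ => this v, sum_ne_zero_eq, Finset.sum_add_distrib,
    Finset.sum_sub_distrib, Finset.sum_sub_distrib, ← Finset.mul_sum, ← Finset.mul_sum, hf, hh,
    hf0, hh0, Finset.sum_const, Finset.card_univ, nsmul_eq_mul, hm]
  field_simp
  ring

/-- centered degree function -/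
noncomputable def gf (n s : ℕ) (A : Finset (Submodule F V)) (v : V) : ℝ :=
  if v = 0 then 0 else deg A v -
    A.card * (((Fintype.card F : ℝ) ^ s - 1) / ((Fintype.card F : ℝ) ^ (2 * n) - 1))

/-- variance -/
noncomputable def Dv (n s : ℕ) (A : Finset (Submodule F V)) : ℝ := ∑ v, gf n s A v * gf n s A v

theorem Dv_nonneg (n s : ℕ) (A : Finset (Submodule F V)) : 0 ≤ Dv n s A :=
  Finset.sum_nonneg fun _ _ => mul_self_nonneg _

theorem Dv_eq {B : V →ₗ[F] V →ₗ[F] F} {n s : ℕ} (h : Symp B n) (hn : 1 ≤ n)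
    {A : Finset (Submodule F V)} (hA : A ⊆ Om B s) :
    Dv n s A = ∑ v, deg A v * deg A v - A.card * A.card - A.card * A.card *
      (((Fintype.card F : ℝ) ^ s - 1) * ((Fintype.card F : ℝ) ^ s - 1) /
        ((Fintype.card F : ℝ) ^ (2 * n) - 1)) := by
  unfold Dv gf
  refine sum_centered _ _ _ _ _ _ _ (deg_zero A) (deg_zero A) (sum_deg hA) (sum_deg hA) ?_ ?_
  · rw [card_V h]; ring
  · have := one_lt_pow₀ (one_lt_q F) (n := 2 * n) (by omega)
    linarith

theorem star_aux (a E Q P m : ℝ) (hm : m ≠ 0) (hQ : Q * (Q * P) - 1 = m) :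
    P * E - a * a - a * a * ((Q * P - 1) * (Q * P - 1) / m)
      = P * (E - a * a - a * a * ((Q - 1) * (Q - 1) / m)) := by
  field_simp
  subst hQ
  ring

theorem star {B : V →ₗ[F] V →ₗ[F] F} {n s : ℕ} (h : Symp B n) (hn : 1 ≤ n) (hs : s ≤ n)
    (hq2 : (2 : ℝ) ≤ (Fintype.card F : ℝ))
    {A A' : Finset (Submodule F V)} (hA : A ⊆ Om B s) (hA' : A' ⊆ Om B s)
    (hX : ∀ S ∈ A, ∀ T ∈ A', ¬ SpaceOpp B S T) :
    (((Fintype.card F : ℝ) - 2) * A.card * A'.card) ^ 2 ≤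
      (Fintype.card F : ℝ) ^ (2 * (n - s)) * Dv n s A * Dv n s A' := by
  have hD := Dv_eq h hn hA
  have hcl := cross_lower hX
  have hcs := codeg_sq h hA
  have hcardV := card_V h
  set q : ℝ := (Fintype.card F : ℝ) with hqdef
  have hm0 : 0 < q ^ (2 * n) - 1 := by
    have := one_lt_pow₀ (one_lt_q F) (n := 2 * n) (by omega)
    linarith
  have hm1 : (Fintype.card V : ℝ) = (q ^ (2 * n) - 1) + 1 := by rw [hcardV]; ring
  have h1 := sum_centered (codeg B A) (deg A') A.card A'.card (q ^ (2 * n - s)) (q ^ s) _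
    (codeg_zero B A) (deg_zero A') (sum_codeg h hA) (sum_deg hA') hm1 hm0
  have h2 := sum_centered (codeg B A) (codeg B A) A.card A.card (q ^ (2 * n - s)) (q ^ (2 * n - s)) _
    (codeg_zero B A) (codeg_zero B A) (sum_codeg h hA) (sum_codeg h hA) hm1 hm0
  have hcauchy := Finset.sum_mul_sq_le_sq_mul_sq Finset.univ
    (fun v => if v = 0 then 0 else codeg B A v - A.card * ((q ^ (2 * n - s) - 1) / (q ^ (2 * n) - 1)))
    (gf n s A')
  have e1 : q ^ (2 * n) = q ^ s * q ^ (2 * n - s) := by rw [← pow_add]; congr 1; omega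
  have e2 : q ^ (2 * n - s) = q ^ s * q ^ (2 * (n - s)) := by rw [← pow_add]; congr 1; omega
  have e3 : q ^ (2 * s) = q ^ s * q ^ s := by rw [← pow_add]; congr 1; omega
  have hQ1 : 1 ≤ q ^ s := one_le_pow₀ (by linarith)
  have hP1 : 1 ≤ q ^ (2 * (n - s)) := one_le_pow₀ (by linarith)
  have hDA' : ∑ v, gf n s A' v ^ 2 = Dv n s A' := by
    unfold Dv; exact Finset.sum_congr rfl fun v _ => by ring
  have hy : ∑ v : V, (if v = 0 then 0 else codeg B A v -
      A.card * ((q ^ (2 * n - s) - 1) / (q ^ (2 * n) - 1))) ^ 2 = q ^ (2 * (n - s)) * Dv n s A := by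
    simp_rw [pow_two (if _ then (_ : ℝ) else _)]
    rw [h2, hD]
    have hE : ∑ v, codeg B A v * codeg B A v = q ^ (2 * (n - s)) * ∑ v, deg A v * deg A v := by
      have hz : q ^ s * q ^ s ≠ 0 := by positivity
      apply mul_right_cancel₀ hz
      rw [← e3, hcs, e1, e2, e3]; ring
    rw [hE]
    rw [e1, e2] at hm0 ⊢
    exact star_aux _ _ _ _ _ hm0.ne' rfl
  rw [hDA', hy] at hcauchy
  refine le_trans ?_ hcauchy
  have hlow : (q - 2) * A.card * A'.card ≤ ∑ v : V, (if v = 0 then 0 else codeg B A v -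
      A.card * ((q ^ (2 * n - s) - 1) / (q ^ (2 * n) - 1))) * gf n s A' v := by
    unfold gf
    rw [h1]
    have hk : (q ^ (2 * n - s) - 1) * (q ^ s - 1) / (q ^ (2 * n) - 1) ≤ 1 := by
      rw [div_le_one hm0, e1]
      have : 1 ≤ q ^ (2 * n - s) := one_le_pow₀ (by linarith)
      nlinarith
    have haa : (0 : ℝ) ≤ A.card * A'.card := by positivity
    have := mul_le_mul_of_nonneg_left hk haa
    nlinarith
  have h0 : 0 ≤ (q - 2) * A.card * A'.card := by
    have : 0 ≤ q - 2 := by linarith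
    positivity
  exact pow_le_pow_left₀ h0 hlow 2

end Spectral

section Variance

variable {F V : Type} [Field F] [Fintype F] [AddCommGroup V] [Module F V] [Fintype V]

theorem gf_zero (n s : ℕ) (A : Finset (Submodule F V)) : gf n s A 0 = 0 := by simp [gf]

theorem gf_smul (n s : ℕ) (A : Finset (Submodule F V)) {c : F} (hc : c ≠ 0) (v : V) :
    gf n s A (c • v) = gf n s A v := by
  unfold gf
  rw [deg_smul A hc]
  simp [hc]

theorem sum_gf {B : V →ₗ[F] V →ₗ[F] F} {n s : ℕ} (h : Symp B n) (hn : 1 ≤ n)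
    {A : Finset (Submodule F V)} (hA : A ⊆ Om B s) : ∑ v, gf n s A v = 0 := by
  unfold gf
  have hm0 : 0 < (Fintype.card F : ℝ) ^ (2 * n) - 1 := by
    have := one_lt_pow₀ (one_lt_q F) (n := 2 * n) (by omega)
    linarith
  rw [sum_ne_zero_eq, Finset.sum_sub_distrib, sum_deg hA, deg_zero, Finset.sum_const,
    Finset.card_univ, nsmul_eq_mul, card_V h]
  field_simp
  ring

theorem sum_line {f : V → ℝ} (f0 : f 0 = 0) (fs : ∀ (c : F), c ≠ 0 → ∀ v, f (c • v) = f v)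
    {u : V} (hu : u ≠ 0) : ∑ v, ind (F ∙ u) v * f v = ((Fintype.card F : ℝ) - 1) * f u := by
  have : ∀ v, ind (F ∙ u) v * f v = (ind (F ∙ u) v - if v = 0 then 1 else 0) * f u := by
    intro v
    by_cases hv : v = 0
    · subst hv; simp [f0, ind_zero]
    · by_cases hm : v ∈ (F ∙ u)
      · obtain ⟨c, rfl⟩ := Submodule.mem_span_singleton.1 hm
        have hc : c ≠ 0 := by rintro rfl; simp at hv
        rw [fs c hc, if_neg hv, sub_zero]
      · simp [ind, hm, hv]
  rw [Finset.sum_congr rfl fun v _ => this v, ← Finset.sum_mul, Finset.sum_sub_distrib, sum_ind,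
    finrank_span_singleton hu]
  simp

theorem quad_line {f : V → ℝ} (f0 : f 0 = 0) (fs : ∀ (c : F), c ≠ 0 → ∀ v, f (c • v) = f v) :
    ∑ u, f u * ∑ v, ind (F ∙ u) v * f v = ((Fintype.card F : ℝ) - 1) * ∑ u, f u * f u := by
  rw [Finset.mul_sum]
  refine Finset.sum_congr rfl fun u _ => ?_
  by_cases hu : u = 0
  · subst hu; simp [f0]
  · rw [sum_line f0 fs hu]; ring

theorem ind_perp_comm {B : V →ₗ[F] V →ₗ[F] F} {n : ℕ} (h : Symp B n) (u v : V) :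
    ind (bperp B (F ∙ u)) v = ind (bperp B (F ∙ v)) u := by
  unfold ind
  rw [mem_bperp_span, mem_bperp_span]
  congr 1
  exact propext ⟨h.symm0, h.symm0⟩

theorem finrank_two {u v : V} (hu : u ≠ 0) (hv : v ∉ (F ∙ u)) :
    finrank F ((F ∙ u) ⊔ (F ∙ v) : Submodule F V) = 2 := by
  rw [finrank_sup_span hv, finrank_span_singleton hu]

theorem quad_perp {B : V →ₗ[F] V →ₗ[F] F} {n : ℕ} (h : Symp B n) (hn : 1 ≤ n)
    {f : V → ℝ} (f0 : f 0 = 0) (fs : ∀ (c : F), c ≠ 0 → ∀ v, f (c • v) = f v)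
    (fsum : ∑ v, f v = 0) :
    ∑ u, (∑ v, ind (bperp B (F ∙ u)) v * f v) ^ 2
      = (Fintype.card F : ℝ) ^ (2 * n - 2) * ((Fintype.card F : ℝ) - 1) ^ 2 * ∑ u, f u * f u := by
  set q : ℝ := (Fintype.card F : ℝ) with hq
  have h1 : ∑ u, (∑ v, ind (bperp B (F ∙ u)) v * f v) ^ 2
      = ∑ v, ∑ w, f v * f w * ∑ u, ind (bperp B (F ∙ v)) u * ind (bperp B (F ∙ w)) u := by
    simp_rw [pow_two, Finset.sum_mul_sum, Finset.mul_sum]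
    rw [Finset.sum_comm]
    refine Finset.sum_congr rfl fun v _ => ?_
    rw [Finset.sum_comm]
    refine Finset.sum_congr rfl fun w _ => ?_
    refine Finset.sum_congr rfl fun u _ => ?_
    rw [ind_perp_comm h u v, ind_perp_comm h u w]
    ring
  have h2 : ∀ v w : V, f v * f w * ∑ u, ind (bperp B (F ∙ v)) u * ind (bperp B (F ∙ w)) u
      = f v * f w * (q ^ (2 * n - 2) + (q ^ (2 * n - 1) - q ^ (2 * n - 2)) * ind (F ∙ v) w) := by
    intro v w
    by_cases hv : v = 0
    · subst hv; simp [f0]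
    by_cases hw : w = 0
    · subst hw; simp [f0]
    congr 1
    simp_rw [ind_mul]
    rw [sum_ind, ← bperp_sup, h.finrank_bperp]
    by_cases hm : w ∈ (F ∙ v)
    · have : (F ∙ v) ⊔ (F ∙ w) = (F ∙ v) := by
        rw [sup_eq_left, Submodule.span_singleton_le_iff_mem]; exact hm
      rw [this, finrank_span_singleton hv]
      simp [ind, hm, hq]
    · rw [finrank_two hv hm]
      simp [ind, hm, hq]
  rw [h1]
  simp_rw [h2]
  have h3 : ∀ v, ∑ w, f v * f w * (q ^ (2 * n - 2) + (q ^ (2 * n - 1) - q ^ (2 * n - 2)) * ind (F ∙ v) w)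
      = q ^ (2 * n - 2) * f v * ∑ w, f w
        + (q ^ (2 * n - 1) - q ^ (2 * n - 2)) * (f v * ∑ w, ind (F ∙ v) w * f w) := by
    intro v
    simp_rw [Finset.mul_sum]
    rw [← Finset.sum_add_distrib]
    refine Finset.sum_congr rfl fun w _ => ?_
    ring
  simp_rw [h3, fsum, mul_zero, zero_add]
  rw [← Finset.mul_sum, quad_line f0 fs, ← hq]
  have : q ^ (2 * n - 1) = q ^ (2 * n - 2) * q := by rw [← pow_succ]; congr 1; omega
  rw [this]; ring

/-- pairwise counts -/
theorem pair_count {B : V →ₗ[F] V →ₗ[F] F} {n s : ℕ} (h : Symp B n) (hs1 : 1 ≤ s)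
    {u v : V} (hu : u ≠ 0) (_hv : v ≠ 0) :
    ∑ S ∈ Om B s, ind S u * ind S v =
      (if 2 ≤ s then phi (Fintype.card F) n s 2 else 0) * ind (bperp B (F ∙ u)) v +
      (phi (Fintype.card F) n s 1 - (if 2 ≤ s then phi (Fintype.card F) n s 2 else 0)) * ind (F ∙ u) v := by
  have h0 : ∑ S ∈ Om B s, ind S u * ind S v = cnt B s ((F ∙ u) ⊔ (F ∙ v)) := by
    unfold cnt
    refine Finset.sum_congr rfl fun S _ => ?_
    unfold ind
    by_cases h1 : u ∈ S <;> by_cases h2 : v ∈ S <;> simp [h1, h2]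
  rw [h0]
  by_cases hm : v ∈ (F ∙ u)
  · have : (F ∙ u) ⊔ (F ∙ v) = (F ∙ u) := by
      rw [sup_eq_left, Submodule.span_singleton_le_iff_mem]; exact hm
    have hp : v ∈ bperp B (F ∙ u) := (isTotIso_iff _).1 (iso_span h u) hm
    rw [this, cnt_eq h (s - 1) (iso_span h u) (finrank_span_singleton hu) (by omega)]
    simp [ind, hm, hp]
  · by_cases hp : v ∈ bperp B (F ∙ u)
    · have hiso := iso_sup_span h (iso_span h u) hp
      split_ifs with hs
      · rw [cnt_eq h (s - 2) hiso (finrank_two hu hm) (by omega)]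
        simp [ind, hm, hp]
      · have : cnt B s ((F ∙ u) ⊔ (F ∙ v)) = 0 := by
          apply Finset.sum_eq_zero
          intro S hS
          rw [if_neg]
          intro hle
          have := Submodule.finrank_mono hle
          rw [finrank_two hu hm, (mem_Om.1 hS).2] at this
          exact hs this
        rw [this]; simp [ind, hm]
    · have : cnt B s ((F ∙ u) ⊔ (F ∙ v)) = 0 := by
        apply Finset.sum_eq_zero
        intro S hS
        rw [if_neg]
        intro hle
        apply hp
        rw [mem_bperp_span]
        have hle' := sup_le_iff.1 hle
        exact (mem_Om.1 hS).1 u ((Submodule.span_singleton_le_iff_mem _ _).1 hle'.1) v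
          ((Submodule.span_singleton_le_iff_mem _ _).1 hle'.2)
      rw [this]; simp [ind, hm, hp]

theorem Dv_eq_sum {B : V →ₗ[F] V →ₗ[F] F} {n s : ℕ} (h : Symp B n) (hn : 1 ≤ n)
    {A : Finset (Submodule F V)} (hA : A ⊆ Om B s) :
    Dv n s A = ∑ S ∈ A, ∑ v, ind S v * gf n s A v := by
  have h1 : ∀ v, gf n s A v * gf n s A v = deg A v * gf n s A v -
    A.card * (((Fintype.card F : ℝ) ^ s - 1) / ((Fintype.card F : ℝ) ^ (2 * n) - 1)) * gf n s A v := by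
    intro v
    unfold gf; split_ifs <;> ring
  unfold Dv
  rw [Finset.sum_congr rfl fun v _ => h1 v, Finset.sum_sub_distrib, ← Finset.mul_sum, sum_gf h hn hA,
    mul_zero, sub_zero, Finset.sum_comm]
  refine Finset.sum_congr rfl fun v _ => ?_
  rw [deg, Finset.sum_mul]

set_option maxHeartbeats 1000000 in
theorem Dv_le {B : V →ₗ[F] V →ₗ[F] F} {n s : ℕ} (h : Symp B n) (hs1 : 1 ≤ s) (hs : s ≤ n)
    {A : Finset (Submodule F V)} (hA : A ⊆ Om B s) :
    Dv n s A ≤ 2 * ((Fintype.card F : ℝ) - 1) * phi (Fintype.card F) n s 1 * A.card := by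
  have hn : 1 ≤ n := hs1.trans hs
  have hq1 := one_lt_q F
  have hDs := Dv_eq_sum h hn hA
  have f0 := gf_zero n s A
  have fs := fun (c : F) (hc : c ≠ 0) v => gf_smul n s A hc v
  have fsum := sum_gf h hn hA
  have hql := quad_line f0 fs
  have hqp := quad_perp h hn f0 fs fsum
  have hpc := fun {u v : V} (hu : u ≠ 0) (hv : v ≠ 0) => pair_count (s := s) h hs1 hu hv
  set q : ℝ := (Fintype.card F : ℝ) with hqdef
  set g := gf n s A with hg
  set D := Dv n s A with hD
  have hDg : ∑ u, g u * g u = D := rfl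
  have hD0 : 0 ≤ D := Dv_nonneg n s A
  set N2 : ℝ := if 2 ≤ s then phi q n s 2 else 0 with hN2
  have hN20 : 0 ≤ N2 := by
    rw [hN2]; split_ifs
    · exact phi_nonneg hq1 hs
    · exact le_rfl
  have hN1 : 0 ≤ phi q n s 1 := phi_nonneg hq1 hs
  have hN2le : N2 * q ^ (n - 1) ≤ phi q n s 1 := by
    rw [hN2]; split_ifs with h2
    · have h3 := phi_step hq1 (n := n) (s := s) (j := 1) (by omega) hs
      have h4 : q ^ s ≤ q ^ n := pow_le_pow_right₀ hq1.le hs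
      have e : q ^ (2 * n - 1) = q ^ (n - 1) * q ^ n := by rw [← pow_add]; congr 1; omega
      have h5 := mul_le_mul_of_nonneg_right h4 hN1
      have h6 : 0 < q ^ n := by positivity
      rw [e] at h3
      have : phi q n s 2 * q ^ (n - 1) * q ^ n ≤ phi q n s 1 * q ^ n := by
        calc phi q n s 2 * q ^ (n - 1) * q ^ n = phi q n s (1 + 1) * (q ^ (n - 1) * q ^ n) := by ring
          _ ≤ q ^ s * phi q n s 1 := h3
          _ ≤ phi q n s 1 * q ^ n := by linarith
      exact le_of_mul_le_mul_right this h6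
    · simpa using hN1
  -- total square
  have htot : ∑ S ∈ Om B s, (∑ v, ind S v * g v) ^ 2
      = N2 * ∑ u, g u * ∑ v, ind (bperp B (F ∙ u)) v * g v
        + (phi q n s 1 - N2) * ((q - 1) * D) := by
    rw [← hDg, ← hql]
    simp_rw [pow_two, Finset.sum_mul_sum]
    rw [Finset.sum_comm]
    rw [Finset.mul_sum, Finset.mul_sum, ← Finset.sum_add_distrib]
    refine Finset.sum_congr rfl fun u _ => ?_
    rw [Finset.sum_comm]
    simp_rw [Finset.mul_sum]
    rw [← Finset.sum_add_distrib]
    refine Finset.sum_congr rfl fun v _ => ?_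
    by_cases hu : u = 0
    · rw [hu, f0]; simp
    by_cases hv : v = 0
    · rw [hv, f0]; simp
    have := hpc hu hv
    calc ∑ S ∈ Om B s, ind S u * g u * (ind S v * g v)
        = (∑ S ∈ Om B s, ind S u * ind S v) * (g u * g v) := by
          rw [Finset.sum_mul]
          exact Finset.sum_congr rfl fun S _ => by ring
      _ = _ := by rw [this]; ring
  have hgh : ∑ u, g u * ∑ v, ind (bperp B (F ∙ u)) v * g v ≤ q ^ (n - 1) * (q - 1) * D := by
    have hc := Finset.sum_mul_sq_le_sq_mul_sq Finset.univ g
      (fun u => ∑ v, ind (bperp B (F ∙ u)) v * g v)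
    rw [hqp, hDg] at hc
    have : ∑ u, g u ^ 2 = D := by rw [← hDg]; exact Finset.sum_congr rfl fun v _ => by ring
    rw [this] at hc
    have e : q ^ (2 * n - 2) = q ^ (n - 1) * q ^ (n - 1) := by rw [← pow_add]; congr 1; omega
    have : D * (q ^ (2 * n - 2) * (q - 1) ^ 2 * D) = (q ^ (n - 1) * (q - 1) * D) ^ 2 := by
      rw [e]; ring
    rw [this] at hc
    have hq0 : 0 ≤ q - 1 := by linarith
    exact (abs_le_of_sq_le_sq' hc (by positivity)).2
  have hup : ∑ S ∈ Om B s, (∑ v, ind S v * g v) ^ 2 ≤ 2 * (q - 1) * phi q n s 1 * D := by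
    rw [htot]
    have h1 := mul_le_mul_of_nonneg_left hgh hN20
    have h2 : 0 ≤ (q - 1) * D := mul_nonneg (by linarith) hD0
    have h3 := mul_le_mul_of_nonneg_right hN2le h2
    have h4 := mul_nonneg hN20 h2
    nlinarith
  have hcs : D ^ 2 ≤ A.card * ∑ S ∈ A, (∑ v, ind S v * g v) ^ 2 := by
    rw [hDs]
    exact sq_sum_le_card_mul_sum_sq
  have hsub : ∑ S ∈ A, (∑ v, ind S v * g v) ^ 2 ≤ ∑ S ∈ Om B s, (∑ v, ind S v * g v) ^ 2 :=
    Finset.sum_le_sum_of_subset_of_nonneg hA fun _ _ _ => sq_nonneg _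
  have hfin : D * D ≤ (2 * (q - 1) * phi q n s 1 * A.card) * D := by
    have ha : (0 : ℝ) ≤ A.card := by positivity
    have := hcs.trans (mul_le_mul_of_nonneg_left (hsub.trans hup) ha)
    calc D * D = D ^ 2 := by ring
      _ ≤ _ := this
      _ = _ := by ring
  rcases hD0.eq_or_lt with h0 | h0
  · rw [← h0]
    have : 0 ≤ q - 1 := by linarith
    positivity
  · exact le_of_mul_le_mul_right hfin h0

theorem thmB {B : V →ₗ[F] V →ₗ[F] F} {n s : ℕ} (h : Symp B n) (hs1 : 1 ≤ s) (hs : s ≤ n)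
    (hq4 : (4 : ℝ) ≤ (Fintype.card F : ℝ))
    {A A' : Finset (Submodule F V)} (hA : A ⊆ Om B s) (hA' : A' ⊆ Om B s)
    (hX : ∀ S ∈ A, ∀ T ∈ A', ¬ SpaceOpp B S T) :
    (A.card : ℝ) * A'.card ≤
      16 * (Fintype.card F : ℝ) ^ (2 * (n - s)) * phi (Fintype.card F) n s 1 ^ 2 := by
  have h1 := star h (hs1.trans hs) hs (by linarith) hA hA' hX
  have h2 := Dv_le h hs1 hs hA
  have h3 := Dv_le h hs1 hs hA'
  have hN1 : 0 ≤ phi (Fintype.card F) n s 1 := phi_nonneg (one_lt_q F) hs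
  have hd := Dv_nonneg n s A
  have hd' := Dv_nonneg n s A'
  set q : ℝ := (Fintype.card F : ℝ) with hqdef
  set N := phi q n s 1
  set P := q ^ (2 * (n - s)) with hP
  have hP0 : 0 < P := by positivity
  set a : ℝ := (A.card : ℝ) with ha
  set a' : ℝ := (A'.card : ℝ) with ha'
  have ha0 : 0 ≤ a := by positivity
  have ha0' : 0 ≤ a' := by positivity
  have hq0 : 0 ≤ q - 1 := by linarith
  have h4 : Dv n s A * Dv n s A' ≤ (2 * (q - 1) * N * a) * (2 * (q - 1) * N * a') :=
    mul_le_mul h2 h3 hd' (by positivity)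
  have h5 : ((q - 2) * a * a') ^ 2 ≤ P * ((2 * (q - 1) * N * a) * (2 * (q - 1) * N * a')) := by
    rw [mul_assoc P] at h1
    exact h1.trans (mul_le_mul_of_nonneg_left h4 hP0.le)
  have h6 : q - 1 ≤ 2 * (q - 2) := by linarith
  have h7 : (q - 1) ^ 2 ≤ 4 * (q - 2) ^ 2 := by nlinarith
  have hq2 : 0 < (q - 2) ^ 2 := by have : 0 < q - 2 := by linarith
                                   positivity
  have h8 : (q - 2) ^ 2 * (a * a') * (a * a') ≤ (q - 2) ^ 2 * (16 * P * N ^ 2) * (a * a') := by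
    have h9 : 0 ≤ P * N ^ 2 * (a * a') := by positivity
    have := mul_le_mul_of_nonneg_right h7 h9
    nlinarith
  rcases (mul_nonneg ha0 ha0').eq_or_lt with h0 | h0
  · rw [← h0]; positivity
  · have := le_of_mul_le_mul_right h8 h0
    exact le_of_mul_le_mul_left this hq2

end Variance

section Residue

variable {F V : Type} [Field F] [Fintype F] [AddCommGroup V] [Module F V] [Fintype V]

theorem opp_symm {B : V →ₗ[F] V →ₗ[F] F} {n ρ : ℕ} (h : Symp B n) {R R' : Submodule F V}
    (hR : finrank F R = ρ) (hR' : finrank F R' = ρ) (ho : bperp B R ⊓ R' = ⊥) :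
    bperp B R' ⊓ R = ⊥ := by
  have h1 := Submodule.finrank_sup_add_finrank_inf_eq (bperp B R) R'
  rw [ho, finrank_bot, h.finrank_bperp, hR, hR'] at h1
  have h2 := h.finrank_le R
  have h3 := bperp_sup (B := B) (bperp B R) R'
  rw [h.bperp_bperp, inf_comm] at h3
  rw [← h3, ← Submodule.finrank_eq_zero (R := F), h.finrank_bperp]
  omega

theorem opp_top {B : V →ₗ[F] V →ₗ[F] F} {n ρ : ℕ} (h : Symp B n) {R R' : Submodule F V}
    (hR : finrank F R = ρ) (hR' : finrank F R' = ρ) (ho : bperp B R ⊓ R' = ⊥) :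
    bperp B R ⊔ R' = ⊤ := by
  have h1 := Submodule.finrank_sup_add_finrank_inf_eq (bperp B R) R'
  rw [ho, finrank_bot, h.finrank_bperp, hR, hR'] at h1
  have h2 := h.finrank_le R
  apply Submodule.eq_top_of_finrank_eq
  rw [h.dim]
  omega

theorem res_prop {B : V →ₗ[F] V →ₗ[F] F} {n s ρ : ℕ} (h : Symp B n) {R R' S : Submodule F V}
    (hR : finrank F R = ρ) (hR' : finrank F R' = ρ) (ho : bperp B R ⊓ R' = ⊥)
    (hS : S ∈ Om B s) (hRS : R ≤ S) :
    S = R ⊔ (S ⊓ (bperp B R ⊓ bperp B R')) ∧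
      finrank F (S ⊓ (bperp B R ⊓ bperp B R') : Submodule F V) = s - ρ := by
  obtain ⟨hS1, hS2⟩ := mem_Om.1 hS
  have ho' := opp_symm h hR hR' ho
  have htop := opp_top h hR' hR ho'
  have hSR : S ≤ bperp B R := fun x hx => mem_bperp.2 fun w hw => hS1 w (hRS hw) x hx
  have e : S ⊓ (bperp B R ⊓ bperp B R') = bperp B R' ⊓ S := by
    rw [← inf_assoc, inf_eq_left.2 hSR, inf_comm]
  have h1 : S = R ⊔ (S ⊓ (bperp B R ⊓ bperp B R')) := by
    rw [e, ← sup_inf_assoc_of_le _ hRS, sup_comm, htop, top_inf_eq]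
  refine ⟨h1, ?_⟩
  have h2 := Submodule.finrank_sup_add_finrank_inf_eq R (S ⊓ (bperp B R ⊓ bperp B R'))
  rw [← h1] at h2
  have h3 : R ⊓ (S ⊓ (bperp B R ⊓ bperp B R')) = ⊥ := by
    rw [e, eq_bot_iff, ← ho']
    exact le_inf (inf_le_right.trans inf_le_left) inf_le_left
  rw [h3, finrank_bot, hS2, hR] at h2
  omega

theorem res_symp {B : V →ₗ[F] V →ₗ[F] F} {n ρ : ℕ} (h : Symp B n) {R R' : Submodule F V}
    (hRi : IsTotIso B R)
    (hR : finrank F R = ρ) (hR' : finrank F R' = ρ) (ho : bperp B R ⊓ R' = ⊥) :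
    Symp (B.domRestrict₁₂ (bperp B R ⊓ bperp B R') (bperp B R ⊓ bperp B R')) (n - ρ) where
  alt := by
    intro v
    simp only [LinearMap.domRestrict₁₂_apply]
    exact h.alt v
  nondeg := by
    rintro ⟨v, hv⟩ hw
    have hv' := Submodule.mem_inf.1 hv
    have h1 : v ∈ bperp B (bperp B (R ⊔ R')) := by
      rw [mem_bperp]
      intro w hw'
      rw [bperp_sup] at hw'
      exact h.symm0 (hw ⟨w, hw'⟩)
    rw [h.bperp_bperp] at h1
    obtain ⟨r, hr, r', hr', rfl⟩ := Submodule.mem_sup.1 h1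
    have h2 : r' ∈ bperp B R := by
      have := Submodule.sub_mem _ hv'.1 ((isTotIso_iff R).1 hRi hr)
      simpa using this
    have h3 : r' = 0 := by
      have : r' ∈ bperp B R ⊓ R' := ⟨h2, hr'⟩
      rw [ho] at this
      simpa using this
    subst h3
    have ho' := opp_symm h hR hR' ho
    have h4 : r + 0 ∈ bperp B R' ⊓ R := ⟨hv'.2, by simpa using hr⟩
    rw [ho'] at h4
    ext
    simpa using h4
  dim := by
    have h1 := Submodule.finrank_sup_add_finrank_inf_eq R R'
    have h2 : R ⊓ R' = ⊥ := by
      rw [eq_bot_iff, ← ho]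
      exact inf_le_inf_right _ ((isTotIso_iff R).1 hRi)
    rw [h2, finrank_bot, hR, hR'] at h1
    rw [← bperp_sup, h.finrank_bperp]
    omega

theorem comap_mem_Om {B : V →ₗ[F] V →ₗ[F] F} {s : ℕ} {S W : Submodule F V} {t : ℕ}
    (hS : S ∈ Om B s) (ht : finrank F (S ⊓ W : Submodule F V) = t) :
    S.comap W.subtype ∈ Om (B.domRestrict₁₂ W W) t := by
  rw [mem_Om]
  constructor
  · intro u hu w hw
    rw [LinearMap.domRestrict₁₂_apply]
    exact (mem_Om.1 hS).1 u hu w hw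
  · rw [← ht, ← Submodule.finrank_map_subtype_eq, Submodule.map_comap_subtype, inf_comm]

theorem comap_inj {S T W R : Submodule F V} (hS : S = R ⊔ (S ⊓ W)) (hT : T = R ⊔ (T ⊓ W))
    (he : S.comap W.subtype = T.comap W.subtype) : S = T := by
  have : S ⊓ W = T ⊓ W := by
    rw [inf_comm, inf_comm T, ← Submodule.map_comap_subtype, ← Submodule.map_comap_subtype, he]
  rw [hS, hT, this]

theorem thmC {B : V →ₗ[F] V →ₗ[F] F} {n s ρ : ℕ} (h : Symp B n) (hρ : ρ < s) (hs : s ≤ n)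
    (hq4 : (4 : ℝ) ≤ (Fintype.card F : ℝ)) {R R' : Submodule F V}
    (hRi : IsTotIso B R)
    (hR : finrank F R = ρ) (hR' : finrank F R' = ρ) (ho : bperp B R ⊓ R' = ⊥)
    {A A' : Finset (Submodule F V)} (hA : A ⊆ Om B s) (hA' : A' ⊆ Om B s)
    (hAR : ∀ S ∈ A, R ≤ S) (hAR' : ∀ S ∈ A', R' ≤ S)
    (hX : ∀ S ∈ A, ∀ T ∈ A', ¬ SpaceOpp B S T) :
    (A.card : ℝ) * A'.card ≤
      16 * (Fintype.card F : ℝ) ^ (2 * (n - s)) * phi (Fintype.card F) n s (ρ + 1) ^ 2 := by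
  have hsymp := res_symp h hRi hR hR' ho
  have hp : ∀ S ∈ A, _ := fun S hS => res_prop h hR hR' ho (hA hS) (hAR S hS)
  have hp' : ∀ S ∈ A', _ := fun S hS =>
    res_prop h hR' hR (opp_symm h hR hR' ho) (hA' hS) (hAR' S hS)
  rw [inf_comm (bperp B R') (bperp B R)] at hp'
  set W := bperp B R ⊓ bperp B R' with hW
  have key := thmB hsymp (s := s - ρ) (A := A.image (fun S => S.comap W.subtype))
    (A' := A'.image (fun S => S.comap W.subtype)) (by omega) (by omega) hq4 ?_ ?_ ?_
  · rw [Finset.card_image_of_injOn, Finset.card_image_of_injOn] at key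
    · rw [phi_shift (one_lt_q F) hρ.le hs] at key
      have e : n - ρ - (s - ρ) = n - s := by omega
      rw [e] at key
      exact key
    · intro S hS T hT he
      exact comap_inj (hp' S hS).1 (hp' T hT).1 he
    · intro S hS T hT he
      exact comap_inj (hp S hS).1 (hp T hT).1 he
  · intro S hS
    obtain ⟨T, hT, rfl⟩ := Finset.mem_image.1 hS
    exact comap_mem_Om (hA hT) (hp T hT).2
  · intro S hS
    obtain ⟨T, hT, rfl⟩ := Finset.mem_image.1 hS
    exact comap_mem_Om (hA' hT) (hp' T hT).2
  · intro S1 hS1 T1 hT1 hopp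
    obtain ⟨S, hS, rfl⟩ := Finset.mem_image.1 hS1
    obtain ⟨T, hT, rfl⟩ := Finset.mem_image.1 hT1
    apply hX S hS T hT
    unfold SpaceOpp at hopp ⊢
    rw [eq_bot_iff]
    rintro t ⟨ht1, ht2⟩
    have ht1' := mem_bperp.1 ht1
    have htW : t ∈ W := by
      refine ⟨mem_bperp.2 fun w hw => ht1' w (hAR S hS hw), mem_bperp.2 fun w hw => ?_⟩
      exact (mem_Om.1 (hA' hT)).1 w (hAR' T hT hw) t ht2
    have : (⟨t, htW⟩ : W) ∈ (⊥ : Submodule F W) := by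
      rw [← hopp]
      refine ⟨mem_bperp.2 ?_, ht2⟩
      intro w hw
      rw [LinearMap.domRestrict₁₂_apply]
      exact ht1' w hw
    have h0 := (Submodule.mem_bot F).1 this
    simpa using congrArg Subtype.val h0

end Residue

section Geometry

variable {F V : Type} [Field F] [Fintype F] [AddCommGroup V] [Module F V] [Fintype V]

theorem deg_le {B : V →ₗ[F] V →ₗ[F] F} {n s : ℕ} (h : Symp B n) (hs1 : 1 ≤ s)
    {A : Finset (Submodule F V)} (hA : A ⊆ Om B s) {v : V} (hv : v ≠ 0) :
    deg A v ≤ phi (Fintype.card F) n s 1 := by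
  rw [← cnt_eq h (s - 1) (iso_span h v) (finrank_span_singleton hv) (by omega)]
  unfold deg cnt
  refine (Finset.sum_le_sum_of_subset_of_nonneg hA fun S _ _ => ind_nonneg S v).trans_eq ?_
  refine Finset.sum_congr rfl fun S _ => ?_
  simp [ind, Submodule.span_singleton_le_iff_mem]

theorem deg_eq_card (A : Finset (Submodule F V)) (v : V) :
    deg A v = ((A.filter (fun S => v ∈ S)).card : ℝ) := by
  unfold deg ind
  rw [Finset.sum_boole]

theorem finrank_inf_perp_ge {B : V →ₗ[F] V →ₗ[F] F} {n : ℕ} (h : Symp B n) (S : Submodule F V)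
    {v : V} (hv : v ≠ 0) :
    finrank F S - 1 ≤ finrank F (S ⊓ bperp B (F ∙ v) : Submodule F V) := by
  have h1 := Submodule.finrank_sup_add_finrank_inf_eq S (bperp B (F ∙ v))
  rw [h.finrank_bperp, finrank_span_singleton hv] at h1
  have h2 := h.finrank_le (S ⊔ bperp B (F ∙ v))
  omega

theorem pair_count2 {B : V →ₗ[F] V →ₗ[F] F} {n s : ℕ} (h : Symp B n) (hs2 : 2 ≤ s)
    {u : V} (hu : u ≠ 0) (v : V) :
    ∑ S ∈ Om B s, ind S u * ind S v =
      phi (Fintype.card F) n s 2 * ind (bperp B (F ∙ u)) v +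
      (phi (Fintype.card F) n s 1 - phi (Fintype.card F) n s 2) * ind (F ∙ u) v := by
  by_cases hv : v = 0
  · subst hv
    simp only [ind_zero, mul_one]
    rw [← cnt_eq h (s - 1) (iso_span h u) (finrank_span_singleton hu) (by omega)]
    unfold cnt
    rw [add_sub_cancel]
    refine Finset.sum_congr rfl fun S _ => ?_
    simp [ind, Submodule.span_singleton_le_iff_mem]
  · rw [pair_count h (by omega) hu hv, if_pos hs2]

theorem perp_count {B : V →ₗ[F] V →ₗ[F] F} {n s : ℕ} (h : Symp B n) (hs2 : 2 ≤ s) (hs : s ≤ n)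
    {u v : V} (hu : u ≠ 0) (hv : v ∉ (F ∙ u)) (huv : B u v = 0) :
    (∑ S ∈ Om B s, ind S u * ind (bperp B S) v) * (Fintype.card F : ℝ) ^ (s - 1)
      ≤ phi (Fintype.card F) n s 1 := by
  have hv0 : v ≠ 0 := fun h0 => hv (h0 ▸ Submodule.zero_mem _)
  have hN : ∑ S ∈ Om B s, ind S u = phi (Fintype.card F) n s 1 := by
    rw [← cnt_eq h (s - 1) (iso_span h u) (finrank_span_singleton hu) (by omega)]
    unfold cnt
    refine Finset.sum_congr rfl fun S _ => ?_
    simp [ind, Submodule.span_singleton_le_iff_mem]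
  have hq1 := one_lt_q F
  have hps := phi_succ hq1 (n := n) (s := s) (j := 1) (by omega)
  have h1 : ∑ w, ind (bperp B (F ∙ v)) w * ∑ S ∈ Om B s, ind S u * ind S w
      = phi (Fintype.card F) n s 2 * (Fintype.card F : ℝ) ^ (2 * n - 2) +
        (phi (Fintype.card F) n s 1 - phi (Fintype.card F) n s 2) * (Fintype.card F : ℝ) := by
    have : ∀ w, ind (bperp B (F ∙ v)) w * ∑ S ∈ Om B s, ind S u * ind S w =
        phi (Fintype.card F) n s 2 * ind (bperp B ((F ∙ u) ⊔ (F ∙ v))) w +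
        (phi (Fintype.card F) n s 1 - phi (Fintype.card F) n s 2) * ind (F ∙ u) w := by
      intro w
      rw [pair_count2 h hs2 hu w, bperp_sup, ← ind_mul]
      have hle : (F ∙ u) ⊓ bperp B (F ∙ v) = (F ∙ u) := by
        rw [inf_eq_left, Submodule.span_singleton_le_iff_mem, mem_bperp_span]
        exact h.symm0 huv
      have h3 := ind_mul (F ∙ u) (bperp B (F ∙ v)) w
      rw [hle] at h3
      linear_combination (phi (Fintype.card F) n s 1 - phi (Fintype.card F) n s 2) * h3
    rw [Finset.sum_congr rfl fun w _ => this w, Finset.sum_add_distrib, ← Finset.mul_sum,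
      ← Finset.mul_sum, sum_ind, sum_ind, h.finrank_bperp, finrank_two hu hv,
      finrank_span_singleton hu, pow_one]
  set q : ℝ := (Fintype.card F : ℝ) with hqdef
  have h2 : ∑ w, ind (bperp B (F ∙ v)) w * ∑ S ∈ Om B s, ind S u * ind S w
      ≥ ∑ S ∈ Om B s, ind S u * (q ^ (s - 1) + (q ^ s - q ^ (s - 1)) * ind (bperp B S) v) := by
    have e : ∑ w, ind (bperp B (F ∙ v)) w * ∑ S ∈ Om B s, ind S u * ind S w
      = ∑ S ∈ Om B s, ind S u * q ^ finrank F (S ⊓ bperp B (F ∙ v) : Submodule F V) := by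
      simp_rw [Finset.mul_sum]
      rw [Finset.sum_comm]
      refine Finset.sum_congr rfl fun S _ => ?_
      rw [← sum_ind, Finset.mul_sum]
      refine Finset.sum_congr rfl fun w _ => ?_
      rw [← ind_mul]; ring
    rw [e]
    refine Finset.sum_le_sum fun S hS => ?_
    refine mul_le_mul_of_nonneg_left ?_ (ind_nonneg S u)
    have hS2 := (mem_Om.1 hS).2
    by_cases hm : v ∈ bperp B S
    · have : S ⊓ bperp B (F ∙ v) = S := by
        rw [inf_eq_left]; exact (le_bperp_span h).2 hm
      rw [this, hS2]; simp [ind, hm]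
    · have h4 := finrank_inf_perp_ge h S hv0
      rw [hS2] at h4
      have h5 : q ^ (s - 1) ≤ q ^ finrank F (S ⊓ bperp B (F ∙ v) : Submodule F V) :=
        pow_le_pow_right₀ hq1.le h4
      simpa [ind, hm] using h5
  have h3 : ∑ S ∈ Om B s, ind S u * (q ^ (s - 1) + (q ^ s - q ^ (s - 1)) * ind (bperp B S) v)
      = phi q n s 1 * q ^ (s - 1) + (q ^ s - q ^ (s - 1)) *
        ∑ S ∈ Om B s, ind S u * ind (bperp B S) v := by
    rw [← hN, Finset.sum_mul, Finset.mul_sum, ← Finset.sum_add_distrib]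
    exact Finset.sum_congr rfl fun S _ => by ring
  rw [h1, h3] at h2
  have e1 : q ^ s = q * q ^ (s - 1) := by rw [← pow_succ']; congr 1; omega
  have e2 : q ^ (2 * n - 1) = q * q ^ (2 * n - 2) := by rw [← pow_succ']; congr 1; omega
  rw [e1, e2, pow_one] at hps
  rw [e1] at h2
  have hps' : phi q n s 1 * (q ^ (s - 1) - 1) = (q ^ (2 * n - 2) - 1) * phi q n s 2 := by
    have hq0 : q ≠ 0 := by positivity
    apply mul_left_cancel₀ hq0
    linear_combination hps
  have hphi2 : 0 ≤ phi q n s 2 := phi_nonneg hq1 hs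
  have hfin : (q - 1) * ((∑ S ∈ Om B s, ind S u * ind (bperp B S) v) * q ^ (s - 1))
      ≤ (q - 1) * phi q n s 1 := by
    nlinarith
  exact le_of_mul_le_mul_left hfin (by linarith)

/-- pigeonhole -/
theorem pigeon {B : V →ₗ[F] V →ₗ[F] F} {n s : ℕ} (h : Symp B n) (hs2 : 2 ≤ s) (hs : s ≤ n)
    {A : Finset (Submodule F V)} (hA : A ⊆ Om B s)
    {u v : V} (hu : u ≠ 0) (hv : v ∉ (F ∙ u)) (huv : B u v = 0)
    (hdeg : 2 * phi (Fintype.card F) n s 1 ≤ deg A u * (Fintype.card F : ℝ) ^ (s - 1)) :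
    ∃ z, B u z = 0 ∧ B v z ≠ 0 ∧
      deg A u * (Fintype.card F : ℝ) ^ (s - 1) ≤ 2 * (Fintype.card F : ℝ) ^ (2 * n - 2) *
        ((A.filter (fun S => u ∈ S ∧ z ∈ S)).card : ℝ) := by
  have hpc := perp_count h hs2 hs hu hv huv
  have hq1 := one_lt_q F
  set q : ℝ := (Fintype.card F : ℝ) with hqdef
  have hZ : 0 < q ^ (s - 1) := by positivity
  have hAM : 2 * ∑ S ∈ A, ind S u * ind (bperp B S) v ≤ deg A u := by
    have : ∑ S ∈ A, ind S u * ind (bperp B S) v ≤ ∑ S ∈ Om B s, ind S u * ind (bperp B S) v :=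
      Finset.sum_le_sum_of_subset_of_nonneg hA fun S _ _ =>
        mul_nonneg (ind_nonneg _ _) (ind_nonneg _ _)
    have h2 : (2 * ∑ S ∈ Om B s, ind S u * ind (bperp B S) v) * q ^ (s - 1)
      ≤ deg A u * q ^ (s - 1) := by linarith
    have := le_of_mul_le_mul_right h2 hZ
    linarith
  set Y : Finset V := Finset.univ.filter (fun z => B u z = 0 ∧ B v z ≠ 0) with hY
  have hYsum : ∀ f : V → ℝ, ∑ z ∈ Y, f z
      = ∑ z, (ind (bperp B (F ∙ u)) z - ind (bperp B ((F ∙ u) ⊔ (F ∙ v))) z) * f z := by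
    intro f
    rw [hY, Finset.sum_filter]
    refine Finset.sum_congr rfl fun z _ => ?_
    rw [bperp_sup]
    unfold ind
    simp only [Submodule.mem_inf, mem_bperp_span]
    by_cases h1 : B u z = 0 <;> by_cases h2 : B v z = 0 <;> simp [h1, h2]
  have hYcard : (Y.card : ℝ) = q ^ (2 * n - 2) * (q - 1) := by
    have := hYsum (fun _ => 1)
    simp only [mul_one, Finset.sum_const, nsmul_eq_mul] at this
    rw [this, Finset.sum_sub_distrib, sum_ind, sum_ind, h.finrank_bperp, h.finrank_bperp,
      finrank_two hu hv, finrank_span_singleton hu]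
    have e2 : q ^ (2 * n - 1) = q * q ^ (2 * n - 2) := by rw [← pow_succ']; congr 1; omega
    rw [e2]; ring
  have hYne : Y.Nonempty := by
    rw [← Finset.card_pos]
    have : (0 : ℝ) < Y.card := by
      rw [hYcard]
      have : 0 < q - 1 := by linarith
      positivity
    exact_mod_cast this
  have hcz : ∀ z, ((A.filter (fun S => u ∈ S ∧ z ∈ S)).card : ℝ) = ∑ S ∈ A, ind S u * ind S z := by
    intro z
    rw [← Finset.sum_boole]
    refine Finset.sum_congr rfl fun S _ => ?_
    unfold ind
    by_cases h1 : u ∈ S <;> by_cases h2 : z ∈ S <;> simp [h1, h2]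
  have hlow : (q - 1) * (deg A u * q ^ (s - 1)) ≤ 2 * ∑ z ∈ Y, ∑ S ∈ A, ind S u * ind S z := by
    have e : ∑ S ∈ A, ind S u * ((1 - ind (bperp B S) v) * (q ^ s - q ^ (s - 1)))
        ≤ ∑ z ∈ Y, ∑ S ∈ A, ind S u * ind S z := by
      rw [Finset.sum_comm]
      refine Finset.sum_le_sum fun S hS => ?_
      rw [← Finset.mul_sum]
      obtain ⟨hS1, hS2⟩ := mem_Om.1 (hA hS)
      by_cases huS : u ∈ S
      · refine mul_le_mul_of_nonneg_left ?_ (ind_nonneg S u)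
        by_cases hm : v ∈ bperp B S
        · simp only [ind, hm, if_true, sub_self, zero_mul]
          exact Finset.sum_nonneg fun z _ => ind_nonneg S z
        · have h3 : ∀ z, (ind (bperp B (F ∙ u)) z - ind (bperp B ((F ∙ u) ⊔ (F ∙ v))) z) * ind S z
            = ind S z - ind (S ⊓ bperp B (F ∙ v)) z := by
            intro z
            rw [bperp_sup, ← ind_mul, ← ind_mul]
            have hSu : S ⊓ bperp B (F ∙ u) = S := by
              rw [inf_eq_left]
              intro x hx
              exact mem_bperp_span.2 (hS1 u huS x hx)
            have h4 := ind_mul S (bperp B (F ∙ u)) z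
            rw [hSu] at h4
            linear_combination (1 - ind (bperp B (F ∙ v)) z) * h4
          rw [hYsum, Finset.sum_congr rfl fun z _ => h3 z, Finset.sum_sub_distrib, sum_ind, sum_ind,
            hS2]
          have hlt : S ⊓ bperp B (F ∙ v) < S := by
            refine lt_of_le_of_ne inf_le_left fun he => hm ?_
            exact (le_bperp_span h).1 (inf_eq_left.1 he)
          have h5 := Submodule.finrank_lt_finrank_of_lt hlt
          rw [hS2] at h5
          have h6 : q ^ finrank F (S ⊓ bperp B (F ∙ v) : Submodule F V) ≤ q ^ (s - 1) :=
            pow_le_pow_right₀ hq1.le (by omega)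
          simp only [ind, hm, if_false, sub_zero, one_mul]
          linarith
      · simp [ind, huS]
    have e1 : q ^ s = q * q ^ (s - 1) := by rw [← pow_succ']; congr 1; omega
    have e3 : ∑ S ∈ A, ind S u * ((1 - ind (bperp B S) v) * (q ^ s - q ^ (s - 1)))
        = (deg A u - ∑ S ∈ A, ind S u * ind (bperp B S) v) * ((q - 1) * q ^ (s - 1)) := by
      rw [deg, ← Finset.sum_sub_distrib, Finset.sum_mul]
      refine Finset.sum_congr rfl fun S _ => ?_
      rw [e1]; ring
    rw [e3] at e
    have h7 : 0 ≤ (q - 1) * q ^ (s - 1) := mul_nonneg (by linarith) hZ.le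
    have := mul_le_mul_of_nonneg_right hAM h7
    linarith
  have hsumle : ∑ z ∈ Y, (deg A u * q ^ (s - 1)) ≤
      ∑ z ∈ Y, 2 * q ^ (2 * n - 2) * ∑ S ∈ A, ind S u * ind S z := by
    rw [Finset.sum_const, nsmul_eq_mul, hYcard, ← Finset.mul_sum]
    have h8 : 0 ≤ q ^ (2 * n - 2) := by positivity
    have := mul_le_mul_of_nonneg_left hlow h8
    linarith
  obtain ⟨z, hz, hle⟩ := Finset.exists_le_of_sum_le hYne hsumle
  rw [hY, Finset.mem_filter] at hz
  refine ⟨z, hz.2.1, hz.2.2, ?_⟩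
  rw [hcz]
  exact hle

end Geometry

section Final

variable {F V : Type} [Field F] [Fintype F] [AddCommGroup V] [Module F V] [Fintype V]

theorem h_ge {q n s : ℕ} (hq : 2 ≤ q) (hs1 : 1 ≤ s) (hs : s ≤ n) :
    (q : ℝ) ^ (n - s) * phi q n s 1 ≤
      gaussq q n s * ∏ i ∈ Finset.Icc 1 (s - 1), ((q : ℝ) ^ (n - i) + 1) := by
  have hq1 : (1 : ℝ) < q := by exact_mod_cast hq
  have hset : Finset.Icc 1 (s - 1) = Finset.Ico 1 s := by
    ext i; simp only [Finset.mem_Icc, Finset.mem_Ico]; omega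
  have hset2 : Finset.Icc 1 s = Finset.Ico 1 (s + 1) := by
    ext i; simp only [Finset.mem_Icc, Finset.mem_Ico]; omega
  have hphi : phi q n s 1 = (∏ i ∈ Finset.Ico 1 s, ((q : ℝ) ^ (n - s + i) - 1) / ((q : ℝ) ^ i - 1)) *
      ∏ i ∈ Finset.Ico 1 s, ((q : ℝ) ^ (n - i) + 1) := by
    have hr := Finset.prod_Ico_reflect
      (fun i => ((q : ℝ) ^ (n - s + i) - 1) / ((q : ℝ) ^ i - 1)) 1 (m := s) (n := s) (by omega)
    have e : s + 1 - s = 1 := by omega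
    have e' : s + 1 - 1 = s := by omega
    rw [e, e'] at hr
    rw [← hr, ← Finset.prod_mul_distrib]
    unfold phi
    refine Finset.prod_congr rfl fun i hi => ?_
    rw [Finset.mem_Ico] at hi
    have e1 : n - s + (s - i) = n - i := by omega
    have e2 : (q : ℝ) ^ (2 * n - i) = (q : ℝ) ^ i * ((q : ℝ) ^ (n - i) * (q : ℝ) ^ (n - i)) := by
      rw [← pow_add, ← pow_add]; congr 1; omega
    have e3 : (q : ℝ) ^ s = (q : ℝ) ^ i * (q : ℝ) ^ (s - i) := by
      rw [← pow_add]; congr 1; omega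
    rw [e1, e2, e3]
    have h1 : (1 : ℝ) < (q : ℝ) ^ (s - i) := one_lt_pow₀ hq1 (by omega)
    have h2 : (q : ℝ) ^ (s - i) - 1 ≠ 0 := by linarith
    have h3 : (q : ℝ) ^ i ≠ 0 := by positivity
    have h4 : (q : ℝ) ^ i * (q : ℝ) ^ (s - i) - (q : ℝ) ^ i ≠ 0 := by
      have : (q : ℝ) ^ i * (q : ℝ) ^ (s - i) - (q : ℝ) ^ i = (q : ℝ) ^ i * ((q : ℝ) ^ (s - i) - 1) := by
        ring
      rw [this]; exact mul_ne_zero h3 h2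
    rw [div_mul_eq_mul_div, div_eq_div_iff h4 h2]
    ring
  unfold gaussq
  rw [hset, hset2, Finset.prod_Ico_succ_top hs1]
  have h0 : 0 ≤ phi q n s 1 := phi_nonneg hq1 hs
  have e5 : n - s + s = n := by omega
  have h6 : (q : ℝ) ^ (n - s) ≤ ((q : ℝ) ^ (n - s + s) - 1) / ((q : ℝ) ^ s - 1) := by
    have h7 : (1 : ℝ) < (q : ℝ) ^ s := one_lt_pow₀ hq1 (by omega)
    have h8 : (1 : ℝ) ≤ (q : ℝ) ^ (n - s) := one_le_pow₀ hq1.le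
    rw [le_div_iff₀ (by linarith), pow_add]
    linarith
  have := mul_le_mul_of_nonneg_right h6 h0
  calc _ ≤ _ := this
    _ = _ := by rw [hphi]; ring

theorem span_iso {B : V →ₗ[F] V →ₗ[F] F} {n : ℕ} (h : Symp B n) {X : Finset V}
    (hX : ∀ u ∈ X, ∀ v ∈ X, B u v = 0) : IsTotIso B (Submodule.span F (X : Set V)) := by
  rw [isTotIso_iff, Submodule.span_le]
  intro u hu
  have h1 : Submodule.span F (X : Set V) ≤ bperp B (F ∙ u) := by
    rw [Submodule.span_le]
    intro w hw
    exact mem_bperp_span.2 (hX u hu w hw)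
  exact (le_bperp_span h).1 h1

theorem card_le_of_iso {B : V →ₗ[F] V →ₗ[F] F} {n : ℕ} (h : Symp B n) {X : Finset V}
    (hX : ∀ u ∈ X, ∀ v ∈ X, B u v = 0) : (X.card : ℝ) ≤ (Fintype.card F : ℝ) ^ n := by
  have h1 := h.iso_le (span_iso h hX)
  have h2 : (Fintype.card F : ℝ) ^ finrank F (Submodule.span F (X : Set V))
      ≤ (Fintype.card F : ℝ) ^ n := pow_le_pow_right₀ (one_lt_q F).le h1
  refine le_trans ?_ h2
  rw [← sum_ind]
  have h3 : (X.card : ℝ) = ∑ v ∈ X, ind (Submodule.span F (X : Set V)) v := by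
    rw [Finset.sum_congr rfl (g := fun _ => (1 : ℝ))]
    · simp
    · intro v hv
      have : v ∈ Submodule.span F (X : Set V) := Submodule.subset_span hv
      simp [ind, this]
  rw [h3]
  exact Finset.sum_le_sum_of_subset_of_nonneg (Finset.subset_univ X) fun v _ _ => ind_nonneg _ v

theorem opp_points {B : V →ₗ[F] V →ₗ[F] F} {u v : V} (huv : B u v ≠ 0) :
    bperp B (F ∙ u) ⊓ (F ∙ v) = ⊥ := by
  rw [eq_bot_iff]
  rintro x ⟨h1, h2⟩
  obtain ⟨c, rfl⟩ := Submodule.mem_span_singleton.1 h2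
  have h3 : B u (c • v) = 0 := mem_bperp_span.1 h1
  simp [huv] at h3
  simp [h3]

theorem opp_lines {B : V →ₗ[F] V →ₗ[F] F} {u z v w : V} (huv : B u v = 0)
    (huw : B u w ≠ 0) (hzv : B z v ≠ 0) :
    bperp B ((F ∙ u) ⊔ (F ∙ z)) ⊓ ((F ∙ v) ⊔ (F ∙ w)) = ⊥ := by
  rw [eq_bot_iff, bperp_sup]
  rintro x ⟨⟨h1, h1'⟩, h2⟩
  obtain ⟨a, ha, b, hb, rfl⟩ := Submodule.mem_sup.1 h2
  obtain ⟨c, rfl⟩ := Submodule.mem_span_singleton.1 ha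
  obtain ⟨d, rfl⟩ := Submodule.mem_span_singleton.1 hb
  have h3 : B u (c • v + d • w) = 0 := mem_bperp_span.1 h1
  have h4 : B z (c • v + d • w) = 0 := mem_bperp_span.1 h1'
  have hd : d = 0 := by simpa [huv, huw] using h3
  subst hd
  have hc : c = 0 := by simpa [hzv] using h4
  subst hc
  simp

/-- first spectral consequence -/
theorem step_one {B : V →ₗ[F] V →ₗ[F] F} {n s : ℕ} (h : Symp B n) (hs1 : 1 ≤ s) (hs : s ≤ n)
    (hq4 : (4 : ℝ) ≤ (Fintype.card F : ℝ))
    {A : Finset (Submodule F V)} (hA : A ⊆ Om B s)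
    (hX : ∀ S ∈ A, ∀ T ∈ A, ¬ SpaceOpp B S T) :
    ((Fintype.card F : ℝ) - 2) * (A.card : ℝ) ^ 2 ≤ (Fintype.card F : ℝ) ^ (n - s) *
      ∑ v, (if v = 0 then 0 else deg A v * deg A v) := by
  have h1 := star h (hs1.trans hs) hs (by linarith) hA hA hX
  have h2 := Dv_eq h (hs1.trans hs) hA
  have h3 := Dv_nonneg n s A
  rw [sum_ne_zero_eq, deg_zero]
  have hq1 := one_lt_q F
  set q : ℝ := (Fintype.card F : ℝ) with hqdef
  have hP : 0 ≤ q ^ (n - s) := by positivity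
  have e : q ^ (2 * (n - s)) * Dv n s A * Dv n s A = (q ^ (n - s) * Dv n s A) ^ 2 := by
    rw [mul_comm 2, pow_mul]; ring
  rw [e] at h1
  have h4 := (abs_le_of_sq_le_sq' h1 (by positivity)).2
  have h5 : Dv n s A ≤ ∑ v, deg A v * deg A v - A.card * A.card := by
    have h6 : 0 < q ^ (2 * n) - 1 := by
      have := one_lt_pow₀ hq1 (n := 2 * n) (by omega)
      linarith
    have h7 : 0 ≤ (A.card : ℝ) * A.card * ((q ^ s - 1) * (q ^ s - 1) / (q ^ (2 * n) - 1)) :=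
      mul_nonneg (by positivity) (div_nonneg (mul_self_nonneg _) h6.le)
    linarith
  calc (q - 2) * (A.card : ℝ) ^ 2 = (q - 2) * A.card * A.card := by ring
    _ ≤ _ := h4
    _ ≤ _ := mul_le_mul_of_nonneg_left h5 hP

theorem final_arith {q P Z N Φ₂ Φ₃ du dv c1 c2 : ℝ} (hq : 1000 ≤ q) (hPq : q ≤ P)
    (hZq : q * q ≤ Z) (hN0 : 0 < N) (hP2 : 0 ≤ Φ₂) (hP3 : 0 ≤ Φ₃)
    (hb1 : Φ₂ * (P * P * Z) ≤ N) (hb2 : Φ₃ * (P * P * Z) ≤ q * Φ₂)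
    (hu : N ^ 2 ≤ 4 * Z * du ^ 2) (hv : N ^ 2 ≤ 4 * Z * dv ^ 2) (hdu : 0 ≤ du) (hdv : 0 ≤ dv)
    (hc1 : 0 ≤ c1) (hc2 : 0 ≤ c2)
    (h1 : du * Z ≤ 2 * (P * P * (Z * Z)) * c1) (h2 : dv * Z ≤ 2 * (P * P * (Z * Z)) * c2)
    (hC : c1 * c2 ≤ 16 * (P * P) * Φ₃ ^ 2) : False := by
  have hq0 : 0 < q := by linarith
  have hP0 : 0 < P := by linarith
  have hZ0 : 0 < Z := by nlinarith
  have a1 : du ≤ 2 * (P * P * Z) * c1 := by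
    have : Z * du ≤ Z * (2 * (P * P * Z) * c1) := by linarith
    exact le_of_mul_le_mul_left this hZ0
  have a2 : dv ≤ 2 * (P * P * Z) * c2 := by
    have : Z * dv ≤ Z * (2 * (P * P * Z) * c2) := by linarith
    exact le_of_mul_le_mul_left this hZ0
  have a3 : du * dv ≤ (2 * (P * P * Z) * c1) * (2 * (P * P * Z) * c2) :=
    mul_le_mul a1 a2 hdv (by positivity)
  have a4 : (N ^ 2) ^ 2 ≤ (4 * Z * (du * dv)) ^ 2 := by
    have := mul_le_mul hu hv (by positivity) (by positivity)
    calc (N ^ 2) ^ 2 = N ^ 2 * N ^ 2 := by ring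
      _ ≤ _ := this
      _ = _ := by ring
  have a5 : N ^ 2 ≤ 4 * Z * (du * dv) := (abs_le_of_sq_le_sq' a4 (by positivity)).2
  have a6 : Φ₃ * (P * P * Z) * (P * P * Z) ≤ q * N := by
    have b1 := mul_le_mul_of_nonneg_right hb2 (by positivity : 0 ≤ P * P * Z)
    have b2 := mul_le_mul_of_nonneg_left hb1 hq0.le
    calc _ ≤ _ := b1
      _ = q * (Φ₂ * (P * P * Z)) := by ring
      _ ≤ _ := b2
  have a7 : (Φ₃ * (P * P * Z) * (P * P * Z)) ^ 2 ≤ (q * N) ^ 2 :=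
    pow_le_pow_left₀ (by positivity) a6 2
  have a8 : N ^ 2 * (P * P * Z) ≤ 256 * (q * q) * N ^ 2 := by
    have b1 := mul_le_mul_of_nonneg_right a5 (by positivity : 0 ≤ P * P * Z)
    have b2 := mul_le_mul_of_nonneg_left a3 (by positivity : 0 ≤ 4 * Z * (P * P * Z))
    have b3 := mul_le_mul_of_nonneg_left hC
      (by positivity : 0 ≤ 16 * Z * (P * P * Z) * (P * P * Z) * (P * P * Z))
    calc _ ≤ _ := b1
      _ = 4 * Z * (P * P * Z) * (du * dv) := by ring
      _ ≤ _ := b2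
      _ = 16 * Z * (P * P * Z) * (P * P * Z) * (P * P * Z) * (c1 * c2) := by ring
      _ ≤ _ := b3
      _ = 256 * (Φ₃ * (P * P * Z) * (P * P * Z)) ^ 2 := by ring
      _ ≤ 256 * (q * N) ^ 2 := by linarith
      _ = _ := by ring
  have a9 : P * P * Z ≤ 256 * (q * q) := by
    have : N ^ 2 * (P * P * Z) ≤ N ^ 2 * (256 * (q * q)) := by linarith
    exact le_of_mul_le_mul_left this (by positivity)
  have b1 : q * q ≤ P * P := mul_le_mul hPq hPq hq0.le hP0.le
  have b2 : (q * q) * Z ≤ P * P * Z := mul_le_mul_of_nonneg_right b1 hZ0.le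
  have b3 : (1000 : ℝ) ≤ Z := by nlinarith
  have b4 : (q * q) * 1000 ≤ (q * q) * Z := mul_le_mul_of_nonneg_left b3 (by positivity)
  nlinarith

set_option maxHeartbeats 4000000 in
theorem main_bound {B : V →ₗ[F] V →ₗ[F] F} {n s : ℕ} (h : Symp B n) (hs2 : 2 < s) (hs : s < n)
    (hq : (1000 : ℝ) ≤ (Fintype.card F : ℝ))
    {A : Finset (Submodule F V)} (hA : A ⊆ Om B s)
    (hX : ∀ S ∈ A, ∀ T ∈ A, ¬ SpaceOpp B S T) :
    (A.card : ℝ) < (Fintype.card F : ℝ) ^ (n - s) * phi (Fintype.card F) n s 1 := by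
  by_contra hcon
  push Not at hcon
  have hq1 := one_lt_q F
  have hq4 : (4 : ℝ) ≤ (Fintype.card F : ℝ) := by linarith
  have hone := step_one h (by omega) hs.le hq4 hA hX
  have hdeg := fun {v : V} (hv : v ≠ 0) => deg_le h (by omega) hA hv
  have hsd := sum_deg hA
  have hpig := fun {u v : V} (hu : u ≠ 0) (hv : v ∉ (F ∙ u)) (huv : B u v = 0) =>
    pigeon h (by omega) hs.le hA hu hv huv
  have hC1 := fun {u v : V} (hu : u ≠ 0) (hv : v ≠ 0) (huv : B u v ≠ 0) =>
    thmC h (ρ := 1) (s := s) (by omega) hs.le hq4 (iso_span h u) (finrank_span_singleton hu)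
      (finrank_span_singleton hv) (opp_points huv)
      (A := A.filter (fun S => u ∈ S)) (A' := A.filter (fun S => v ∈ S))
      ((Finset.filter_subset _ _).trans hA) ((Finset.filter_subset _ _).trans hA)
      (fun S hS => (Submodule.span_singleton_le_iff_mem _ _).2 (Finset.mem_filter.1 hS).2)
      (fun S hS => (Submodule.span_singleton_le_iff_mem _ _).2 (Finset.mem_filter.1 hS).2)
      (fun S hS T hT => hX S (Finset.mem_filter.1 hS).1 T (Finset.mem_filter.1 hT).1)
  have hphi1 := phi_step hq1 (n := n) (s := s) (j := 1) (by omega) hs.le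
  have hphi2 := phi_step hq1 (n := n) (s := s) (j := 2) (by omega) hs.le
  have hN0 : 0 < phi (Fintype.card F) n s 1 := phi_pos hq1 hs.le
  have hcardle := fun {X : Finset V} (hX : ∀ u ∈ X, ∀ v ∈ X, B u v = 0) => card_le_of_iso h hX
  have hP2 : 0 ≤ phi (Fintype.card F) n s 2 := phi_nonneg hq1 hs.le
  have hP3 : 0 ≤ phi (Fintype.card F) n s 3 := phi_nonneg hq1 hs.le
  simp_rw [← deg_eq_card] at hC1
  have hspan : ∀ u : V, u ≠ 0 → ((Finset.univ.filter (fun v => v ∈ (F ∙ u))).card : ℝ)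
      = (Fintype.card F : ℝ) := by
    intro u hu
    have := sum_ind (F ∙ u)
    rw [finrank_span_singleton hu, pow_one] at this
    rw [← this, ← Finset.sum_boole]
    rfl
  norm_num only [] at hphi1 hphi2
  set q : ℝ := (Fintype.card F : ℝ) with hqdef
  set N := phi q n s 1 with hN
  set Φ₂ := phi q n s 2
  set Φ₃ := phi q n s 3
  have eN : q ^ n = q ^ (n - s) * (q * q ^ (s - 1)) := by
    rw [← pow_succ', ← pow_add]; congr 1; omega
  have e1 : q ^ s = q * q ^ (s - 1) := by rw [← pow_succ']; congr 1; omega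
  have e2 : q ^ (2 * n - 1) = q * (q ^ (n - s) * q ^ (n - s) * (q ^ (s - 1) * q ^ (s - 1))) := by
    rw [← pow_add, ← pow_add, ← pow_add, ← pow_succ']; congr 1; omega
  have e3 : q ^ (2 * n - 2) = q ^ (n - s) * q ^ (n - s) * (q ^ (s - 1) * q ^ (s - 1)) := by
    rw [← pow_add, ← pow_add, ← pow_add]; congr 1; omega
  have e4 : q ^ (2 * (n - s)) = q ^ (n - s) * q ^ (n - s) := by
    rw [← pow_add]; congr 1; omega
  have hPq : q ≤ q ^ (n - s) := le_self_pow₀ hq1.le (by omega)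
  have hZq : q * q ≤ q ^ (s - 1) := by
    rw [← pow_two]; exact pow_le_pow_right₀ hq1.le (by omega)
  rw [e1] at hsd
  rw [e1, e2] at hphi1
  rw [e1, e3] at hphi2
  rw [e3] at hpig
  rw [eN] at hcardle
  rw [e4] at hC1
  set P := q ^ (n - s) with hP
  set Z := q ^ (s - 1) with hZ
  set a : ℝ := (A.card : ℝ) with ha
  have hq0 : 0 < q := by linarith
  have hP0 : 0 < P := by linarith
  have hZ0 : 0 < Z := by nlinarith
  have ha0 : 0 < a := lt_of_lt_of_le (mul_pos hP0 hN0) hcon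
  -- phi bounds
  have hb1 : Φ₂ * (P * P * Z) ≤ N := by
    have : (q * Z) * (Φ₂ * (P * P * Z)) ≤ (q * Z) * N := by linarith
    exact le_of_mul_le_mul_left this (by positivity)
  have hb2 : Φ₃ * (P * P * Z) ≤ q * Φ₂ := by
    have : Z * (Φ₃ * (P * P * Z)) ≤ Z * (q * Φ₂) := by linarith
    exact le_of_mul_le_mul_left this hZ0
  -- the heavy points
  set X : Finset V := Finset.univ.filter (fun v => v ≠ 0 ∧ N ≤ 4 * Z * deg A v) with hXdef
  have hlight : ∑ v, (if v = 0 then 0 else deg A v * deg A v) ≤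
      ∑ v ∈ X, deg A v ^ 2 + q * N * a / 4 := by
    have h1 : ∀ v, (if v = 0 then 0 else deg A v * deg A v) ≤
        (if v ≠ 0 ∧ N ≤ 4 * Z * deg A v then deg A v ^ 2 else 0) + N / (4 * Z) * deg A v := by
      intro v
      have hd := deg_nonneg A v
      have hnz : 0 ≤ N / (4 * Z) * deg A v := by positivity
      by_cases hv : v = 0
      · simp only [hv, if_true]
        simp only [hv] at hnz
        simpa using hnz
      · by_cases hv2 : N ≤ 4 * Z * deg A v
        · rw [if_neg hv, if_pos ⟨hv, hv2⟩]; nlinarith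
        · rw [if_neg hv, if_neg (fun hh => hv2 hh.2), zero_add]
          refine mul_le_mul_of_nonneg_right ?_ hd
          rw [le_div_iff₀ (by positivity)]
          push Not at hv2
          linarith
    refine (Finset.sum_le_sum fun v _ => h1 v).trans ?_
    rw [Finset.sum_add_distrib, ← Finset.mul_sum, hsd, hXdef, Finset.sum_filter]
    apply le_of_eq
    congr 1
    field_simp
  have hXsum : q / 2 * P * N ^ 2 ≤ ∑ v ∈ X, deg A v ^ 2 := by
    have h1 := hone.trans (mul_le_mul_of_nonneg_left hlight hP0.le)
    have h2 : P * N * (q * a) ≤ a * (q * a) := mul_le_mul_of_nonneg_right hcon (by positivity)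
    have h3 : q / 2 * a ^ 2 ≤ P * ∑ v ∈ X, deg A v ^ 2 := by nlinarith [sq_nonneg a]
    have h4 : (P * N) ^ 2 ≤ a ^ 2 := pow_le_pow_left₀ (by positivity) hcon 2
    have h5 : P * (q / 2 * P * N ^ 2) ≤ P * ∑ v ∈ X, deg A v ^ 2 := by
      have := mul_le_mul_of_nonneg_left h4 (by positivity : 0 ≤ q / 2)
      calc P * (q / 2 * P * N ^ 2) = q / 2 * (P * N) ^ 2 := by ring
        _ ≤ q / 2 * a ^ 2 := this
        _ ≤ _ := h3
    exact le_of_mul_le_mul_left h5 hP0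
  have hXperp : ∀ u ∈ X, ∀ v ∈ X, B u v = 0 := by
    intro u hu v hv
    by_contra huv
    rw [hXdef, Finset.mem_filter] at hu hv
    have h1 := hC1 hu.2.1 hv.2.1 huv
    norm_num only [] at h1
    have h2 : N * N ≤ (4 * Z * deg A u) * (4 * Z * deg A v) :=
      mul_le_mul hu.2.2 hv.2.2 hN0.le (by have := deg_nonneg A u; positivity)
    have h3 : N * N ≤ 256 * (P * P) * (Z * Z) * Φ₂ ^ 2 := by
      have := mul_le_mul_of_nonneg_left h1 (by positivity : 0 ≤ 16 * (Z * Z))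
      calc N * N ≤ _ := h2
        _ = 16 * (Z * Z) * (deg A u * deg A v) := by ring
        _ ≤ _ := this
        _ = _ := by ring
    have h4 : (Φ₂ * (P * P * Z)) ^ 2 ≤ N ^ 2 := pow_le_pow_left₀ (by positivity) hb1 2
    have h5 : (P * P) * (N * N) ≤ 256 * (N * N) := by
      have := mul_le_mul_of_nonneg_left h3 (by positivity : 0 ≤ P * P)
      calc _ ≤ _ := this
        _ = 256 * (Φ₂ * (P * P * Z)) ^ 2 := by ring
        _ ≤ 256 * N ^ 2 := by linarith
        _ = _ := by ring
    have h6 := le_of_mul_le_mul_right h5 (by positivity)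
    nlinarith
  have hXcard := hcardle hXperp
  -- very heavy points
  set X' : Finset V := X.filter (fun v => N ^ 2 ≤ 4 * Z * deg A v ^ 2) with hX'def
  have hX'sum : ∑ v ∈ X, deg A v ^ 2 ≤ (X'.card : ℝ) * N ^ 2 + X.card * (N ^ 2 / (4 * Z)) := by
    have h1 : ∀ v ∈ X, deg A v ^ 2 ≤ (if N ^ 2 ≤ 4 * Z * deg A v ^ 2 then N ^ 2 else 0)
        + N ^ 2 / (4 * Z) := by
      intro v hv
      rw [hXdef, Finset.mem_filter] at hv
      have hd := deg_nonneg A v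
      have hdN := hdeg hv.2.1
      have hnz : 0 ≤ N ^ 2 / (4 * Z) := by positivity
      split_ifs with hc
      · have := pow_le_pow_left₀ hd hdN 2
        linarith
      · rw [zero_add, le_div_iff₀ (by positivity)]
        push Not at hc
        linarith
    refine (Finset.sum_le_sum h1).trans ?_
    rw [Finset.sum_add_distrib, ← Finset.sum_filter, Finset.sum_const, Finset.sum_const,
      nsmul_eq_mul, nsmul_eq_mul]
  have hX'card : q < (X'.card : ℝ) := by
    have h1 : (X.card : ℝ) * (N ^ 2 / (4 * Z)) ≤ q * P * N ^ 2 / 4 := by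
      have h2 : 0 ≤ N ^ 2 / (4 * Z) := by positivity
      refine (mul_le_mul_of_nonneg_right hXcard h2).trans_eq ?_
      field_simp
    have hNN : 0 < N ^ 2 := by positivity
    have h3 : (q * P / 4) * N ^ 2 ≤ (X'.card : ℝ) * N ^ 2 := by linarith
    have h4 := le_of_mul_le_mul_right h3 hNN
    nlinarith
  obtain ⟨u, hu⟩ : X'.Nonempty := by
    rw [← Finset.card_pos]
    have : (0 : ℝ) < X'.card := by linarith
    exact_mod_cast this
  have huX : u ∈ X := (Finset.mem_filter.1 hu).1
  have hu0 : u ≠ 0 := by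
    rw [hXdef, Finset.mem_filter] at huX; exact huX.2.1
  obtain ⟨v, hv, hvu⟩ : ∃ v ∈ X', v ∉ (F ∙ u) := by
    by_contra hno
    push Not at hno
    have hsub : X' ⊆ Finset.univ.filter (fun v => v ∈ (F ∙ u)) := by
      intro v hv
      rw [Finset.mem_filter]
      exact ⟨Finset.mem_univ _, hno v hv⟩
    have h1 : (X'.card : ℝ) ≤ ((Finset.univ.filter (fun v => v ∈ (F ∙ u))).card : ℝ) := by
      exact_mod_cast Finset.card_le_card hsub
    rw [hspan u hu0] at h1
    linarith
  have hvX : v ∈ X := (Finset.mem_filter.1 hv).1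
  have hv0 : v ≠ 0 := by
    rw [hXdef, Finset.mem_filter] at hvX; exact hvX.2.1
  have huv : B u v = 0 := hXperp u huX v hvX
  have hvu' : B v u = 0 := h.symm0 huv
  have huv' : u ∉ (F ∙ v) := by
    intro hm
    obtain ⟨c, hc⟩ := Submodule.mem_span_singleton.1 hm
    have hc0 : c ≠ 0 := by rintro rfl; exact hu0 (by simpa using hc.symm)
    apply hvu
    rw [← hc]
    exact Submodule.mem_span_singleton.2 ⟨c⁻¹, by rw [smul_smul, inv_mul_cancel₀ hc0, one_smul]⟩
  have hbig : ∀ w, N ^ 2 ≤ 4 * Z * deg A w ^ 2 → 2 * N ≤ deg A w * Z := by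
    intro w hw
    have hd := deg_nonneg A w
    have h1 : (2 * N) ^ 2 ≤ (deg A w * Z) ^ 2 := by
      have h2 := mul_le_mul_of_nonneg_left hw (by norm_num : (0 : ℝ) ≤ 4)
      have h3 : (16 : ℝ) * (Z * deg A w ^ 2) ≤ Z * (Z * deg A w ^ 2) :=
        mul_le_mul_of_nonneg_right (by nlinarith) (by positivity)
      calc (2 * N) ^ 2 = 4 * N ^ 2 := by ring
        _ ≤ _ := h2
        _ = 16 * (Z * deg A w ^ 2) := by ring
        _ ≤ _ := h3
        _ = _ := by ring
    exact (abs_le_of_sq_le_sq' h1 (by positivity)).2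
  have huh := (Finset.mem_filter.1 hu).2
  have hvh := (Finset.mem_filter.1 hv).2
  obtain ⟨z, hz1, hz2, hz3⟩ := hpig hu0 hvu huv (hbig u huh)
  obtain ⟨w, hw1, hw2, hw3⟩ := hpig hv0 huv' hvu' (hbig v hvh)
  have hzu : z ∉ (F ∙ u) := by
    intro hm
    obtain ⟨c, rfl⟩ := Submodule.mem_span_singleton.1 hm
    simp [hvu'] at hz2
  have hwv : w ∉ (F ∙ v) := by
    intro hm
    obtain ⟨c, rfl⟩ := Submodule.mem_span_singleton.1 hm
    simp [huv] at hw2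
  have hC2 := thmC h (ρ := 2) (s := s) (by omega) hs.le hq4
      (iso_sup_span h (iso_span h u) (mem_bperp_span.2 hz1)) (finrank_two hu0 hzu)
      (finrank_two hv0 hwv) (opp_lines huv hw2 (fun h0 => hz2 (h.symm0 h0)))
      (A := A.filter (fun S => u ∈ S ∧ z ∈ S)) (A' := A.filter (fun S => v ∈ S ∧ w ∈ S))
      ((Finset.filter_subset _ _).trans hA) ((Finset.filter_subset _ _).trans hA)
      (fun S hS => sup_le
        ((Submodule.span_singleton_le_iff_mem _ _).2 (Finset.mem_filter.1 hS).2.1)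
        ((Submodule.span_singleton_le_iff_mem _ _).2 (Finset.mem_filter.1 hS).2.2))
      (fun S hS => sup_le
        ((Submodule.span_singleton_le_iff_mem _ _).2 (Finset.mem_filter.1 hS).2.1)
        ((Submodule.span_singleton_le_iff_mem _ _).2 (Finset.mem_filter.1 hS).2.2))
      (fun S hS T hT => hX S (Finset.mem_filter.1 hS).1 T (Finset.mem_filter.1 hT).1)
  norm_num only [] at hC2
  rw [← hqdef, e4] at hC2
  have hdu := deg_nonneg A u
  have hdv := deg_nonneg A v
  generalize deg A u = du at *
  generalize deg A v = dv at *
  have hc10 : (0 : ℝ) ≤ ((A.filter (fun S => u ∈ S ∧ z ∈ S)).card : ℝ) := by positivity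
  have hc20 : (0 : ℝ) ≤ ((A.filter (fun S => v ∈ S ∧ w ∈ S)).card : ℝ) := by positivity
  generalize ((A.filter (fun S => u ∈ S ∧ z ∈ S)).card : ℝ) = c1 at *
  generalize ((A.filter (fun S => v ∈ S ∧ w ∈ S)).card : ℝ) = c2 at *
  exact final_arith hq hPq hZq hN0 hP2 hP3 hb1 hb2 huh hvh hdu hdv hc10 hc20 hz3 hw3 hC2

end Final

/-- For `2 < s < n` and `q` large (in terms of `n`), every EKR-set
of totally isotropic `s`-spaces has size strictly less than
`h_{n,s} = [n choose s]_q ∏_{i=1}^{s-1}(q^{n-i}+1)`. -/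
theorem stmt_3 (n : ℕ) (hn : 3 ≤ n) :
    ∃ q₀ : ℕ, ∀ (F V : Type) [Field F] [Fintype F] [AddCommGroup V] [Module F V],
      ∀ q : ℕ, Fintype.card F = q → q₀ ≤ q →
      ∀ B : V →ₗ[F] V →ₗ[F] F, IsAltForm B → NondegForm B →
      FiniteDimensional F V → Module.finrank F V = 2 * n →
      ∀ s : ℕ, 2 < s → s < n →
      ∀ 𝓕 : Set (Submodule F V),
        IsEKRSpaces B s 𝓕 →
        (𝓕.ncard : ℝ) <
          gaussq q n s * ∏ i ∈ Finset.Icc 1 (s - 1), ((q : ℝ) ^ (n - i) + 1) := by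
  refine ⟨1000, ?_⟩
  intro F V _ _ _ _ q hcard hq B halt hnd hfd hdim s hs2 hs 𝓕 hEKR
  have hfin : Finite V := Module.finite_of_finite F
  letI : Fintype V := Fintype.ofFinite V
  have hsymp : Symp B n := ⟨halt, hnd, hdim⟩
  subst hcard
  set A : Finset (Submodule F V) := (Set.toFinite 𝓕).toFinset with hA
  have hmem : ∀ S, S ∈ A ↔ S ∈ 𝓕 := fun S => by simp [hA]
  have hcardA : 𝓕.ncard = A.card := by
    rw [hA, Set.ncard_eq_toFinset_card]
  rw [hcardA]
  refine lt_of_lt_of_le (main_bound hsymp hs2 hs (by exact_mod_cast hq) (A := A) ?_ ?_)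
    (h_ge (by omega) (by omega) hs.le)
  · intro S hS
    exact mem_Om.2 (hEKR.1 S ((hmem S).1 hS))
  · intro S hS T hT
    exact hEKR.2 S ((hmem S).1 hS) T ((hmem T).1 hT)
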